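/- arXiv:1407.4637 — 2 statements merged into one kernel-verified Lean document; each statement's English description precedes it below -/
import Mathlib

section
/- Let ρ be an admissible weight function on [0,∞) with sup_{k∈ℕ} ρ(k+1)/ρ(k) < ∞. Then the translation semigroup (T_t)_{t≥0} is frequently hypercyclic on C₀^ρ([0,∞)) if and only if there exist a sequence (M(p))_{p∈ℕ} of positive real numbers tending to ∞ and a sequence (E_p)_{p∈ℕ} of subsets of ℕ such that: (a) for any p ≥ 1, ldens(E_p) > 0; (b) for any distinct p, q ≥ 1, (E_p + {0,1,…,p}) ∩ (E_q + {0,1,…,q}) = ∅; (c) for every p ≥ 1, lim_{n→∞, n∈E_p} ρ(n) = 0; (d) for any p, q ≥ 1 and any n ∈ E_p, m ∈ E_q with m > n, ρ(m−n) ≤ 1/(M(p)M(q)). Moreover, these conditions hold for some sequence (M(p))_{p∈ℕ} tending to ∞ if and only if for every sequence (M(p))_{p∈ℕ} of positive reals tending to ∞ there exists a sequence (E_p)_{p∈ℕ} satisfying (a)–(d). -/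
/-!
The sequence `M` is immaterial: replacing `(E_p)` by a subsequence `(E_{φ(p)})` makes `M` grow
arbitrarily fast (`cond6_of_cond6`). This is the last assertion of the theorem, and it is also
used in the construction of a frequently hypercyclic vector.

If `f` is frequently hypercyclic, let `g_p` be a plateau of height `v_p ~ p` and length about `p`,
and `0` afterwards. The integer parts of the times `t` at which `T_t f` is very close to `g_p` have
positive lower density, and so has a subset `E_p` with gaps larger than `p + 4`, chosen greedily.
Since `f ≈ v_p` on `[n + 1, n + p + 10]` for `n ∈ E_p`, the plateaus of distinct indices are
disjoint, and `f ρ → 0` gives `ρ → 0` along `E_p`. If `n < m` with `n ∈ E_p` and `m ∈ E_q`, some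
point of the plateau of `m` lies where `T_t f` should be close to `0`; this bounds
`ρ(m - n) v_q` by a small number depending on `p` (`exists_cond6_of_FH`).

Conversely, take a countable dense family of bumps, the `p`-th one supported in `[-1, p + 1]`, and
let `f` be the sum of the translates of `bump p` by the elements of `E_p`, where `M` grows fast
with respect to the bumps. Since `ρ` varies at most exponentially in both directions
(`AdmissibleH.exists_pow`, which needs the bound on `ρ(k+1)/ρ(k)`), (d) forces large gaps, so that
the translates do not overlap, and makes all bumps after time `n ∈ E_p` small when seen from `n`.
Hence `T_n f` is close to `bump p`, and so is `T_t f` for `t` in a short interval `[n, n + δ]`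
(`FH_of_cond6`).
-/

open Filter MeasureTheory

/-- An admissible weight function on `[0,∞)`. -/
def AdmissibleH (ρ : ℝ → ℝ) : Prop :=
  Measurable ρ ∧ (∀ x, 0 ≤ x → 0 < ρ x) ∧
    ∃ M : ℝ, 1 ≤ M ∧ ∃ ω : ℝ, ∀ τ : ℝ, 0 ≤ τ → ∀ t : ℝ, 0 < t →
      ρ τ ≤ M * Real.exp (ω * t) * ρ (τ + t)

/-- The lower density of a set `A ⊆ ℕ`. -/
noncomputable def ldens (A : Set ℕ) : ℝ :=
  atTop.liminf fun N : ℕ => ((A ∩ Set.Iic N).ncard : ℝ) / (N : ℝ)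

/-- The lower density of a measurable set `M ⊆ [0,∞)`. -/
noncomputable def ldensR (M : Set ℝ) : ℝ :=
  atTop.liminf fun N : ℝ => (volume (M ∩ Set.Icc 0 N)).toReal / N

/-- Membership in `C₀^ρ([0,∞))`: continuous on `[0,∞)` with `f(x)ρ(x) → 0` as `x → ∞`. -/
def MemC0rhoH (ρ f : ℝ → ℝ) : Prop :=
  ContinuousOn f (Set.Ici 0) ∧ Tendsto (fun x => f x * ρ x) atTop (nhds 0)

/-- Frequent hypercyclicity of the translation semigroup on `C₀^ρ([0,∞))`. -/
def FHTransC0H (ρ : ℝ → ℝ) : Prop :=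
  ∃ f : ℝ → ℝ, MemC0rhoH ρ f ∧ ∀ g : ℝ → ℝ, MemC0rhoH ρ g → ∀ ε : ℝ, 0 < ε →
    0 < ldensR {t : ℝ | 0 ≤ t ∧ ∀ x : ℝ, 0 ≤ x → |f (x + t) - g x| * ρ x ≤ ε}

/-- A sequence of positive real numbers tending to `∞`. -/
def GoodM (M : ℕ → ℝ) : Prop := (∀ p, 0 < M p) ∧ Tendsto M atTop atTop

/-- Conditions (a)–(d) of STATEMENT 6:
(a) each `E_p` (`p ≥ 1`) has positive lower density;
(b) for distinct `p, q ≥ 1`, `(E_p + {0,…,p}) ∩ (E_q + {0,…,q}) = ∅`;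
(c) `ρ(n) → 0` as `n → ∞` along `E_p`;
(d) for `n ∈ E_p`, `m ∈ E_q` with `m > n`, `ρ(m - n) ≤ 1/(M(p)M(q))`. -/
def Cond6 (ρ : ℝ → ℝ) (M : ℕ → ℝ) (E : ℕ → Set ℕ) : Prop :=
  (∀ p : ℕ, 1 ≤ p → 0 < ldens (E p)) ∧
  (∀ p q : ℕ, 1 ≤ p → 1 ≤ q → p ≠ q → ∀ n ∈ E p, ∀ m ∈ E q,
      ∀ j k : ℕ, j ≤ p → k ≤ q → n + j ≠ m + k) ∧
  (∀ p : ℕ, 1 ≤ p →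
      Tendsto (fun n : ℕ => ρ (n : ℝ)) (atTop ⊓ Filter.principal (E p)) (nhds 0)) ∧
  (∀ p q : ℕ, 1 ≤ p → 1 ≤ q → ∀ n ∈ E p, ∀ m ∈ E q, n < m →
      ρ ((m : ℝ) - (n : ℝ)) ≤ 1 / (M p * M q))

/-! ### Lower densities -/

/-- For an eventually bounded function, positivity of the lower limit means being eventually
bounded away from `0`. -/
lemma liminf_pos_iff_exists {α : Type*} {l : Filter α} [l.NeBot] {u : α → ℝ} {B : ℝ}
    (h0 : ∀ᶠ x in l, 0 ≤ u x) (hB : ∀ᶠ x in l, u x ≤ B) :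
    0 < l.liminf u ↔ ∃ c > 0, ∀ᶠ x in l, c ≤ u x := by
  have hbelow : l.IsBoundedUnder (· ≥ ·) u := ⟨0, by simpa using h0⟩
  have habove : l.IsBoundedUnder (· ≤ ·) u := ⟨B, by simpa using hB⟩
  constructor
  · intro h
    refine ⟨l.liminf u / 2, by linarith, ?_⟩
    have := eventually_lt_of_lt_liminf (show l.liminf u / 2 < l.liminf u by linarith) hbelow
    exact this.mono fun x hx => hx.le
  · rintro ⟨c, hc, h⟩
    exact hc.trans_le (le_liminf_of_le habove.isCoboundedUnder_ge h)

lemma ldens_pos_iff (A : Set ℕ) :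
    0 < ldens A ↔ ∃ c > 0, ∀ᶠ N : ℕ in atTop, c * (N : ℝ) ≤ ((A ∩ Set.Iic N).ncard : ℝ) := by
  have hcard : ∀ N : ℕ, (A ∩ Set.Iic N).ncard ≤ N + 1 := fun N => by
    have := Set.ncard_le_ncard (s := A ∩ Set.Iic N) (t := Set.Iic N) Set.inter_subset_right
      (Set.finite_Iic N)
    simpa [Set.ncard_eq_toFinset_card'] using this
  unfold ldens
  rw [liminf_pos_iff_exists (B := 2) (Eventually.of_forall fun N => by positivity)]
  · refine exists_congr fun c => and_congr_right fun _ => eventually_congr ?_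
    filter_upwards [eventually_gt_atTop 0] with N hN
    rw [le_div_iff₀ (by exact_mod_cast hN)]
  · filter_upwards [eventually_gt_atTop 0] with N hN
    rw [div_le_iff₀ (by exact_mod_cast hN)]
    have h1 : ((A ∩ Set.Iic N).ncard : ℝ) ≤ N + 1 := by exact_mod_cast hcard N
    have h2 : (1 : ℝ) ≤ N := by exact_mod_cast hN
    linarith

lemma volume_inter_Icc_ne_top (A : Set ℝ) (X : ℝ) : volume (A ∩ Set.Icc 0 X) ≠ ⊤ :=
  ((measure_mono Set.inter_subset_right).trans_lt (by simp)).ne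

lemma ldensR_pos_iff (A : Set ℝ) :
    0 < ldensR A ↔
      ∃ c > 0, ∀ᶠ X : ℝ in atTop, c * X ≤ (volume (A ∩ Set.Icc 0 X)).toReal := by
  unfold ldensR
  rw [liminf_pos_iff_exists (B := 1)]
  · refine exists_congr fun c => and_congr_right fun _ => eventually_congr ?_
    filter_upwards [eventually_gt_atTop 0] with X hX
    rw [le_div_iff₀ hX]
  · filter_upwards [eventually_gt_atTop 0] with X hX
    positivity
  · filter_upwards [eventually_gt_atTop 0] with X hX
    rw [div_le_iff₀ hX]
    have h1 : (volume (A ∩ Set.Icc 0 X)).toReal ≤ (volume (Set.Icc 0 X)).toReal :=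
      ENNReal.toReal_mono (by simp) (measure_mono Set.inter_subset_right)
    simpa [hX.le] using h1

lemma nonempty_of_ldens_pos {A : Set ℕ} (h : 0 < ldens A) : A.Nonempty := by
  obtain ⟨c, hc, h⟩ := (ldens_pos_iff A).1 h
  obtain ⟨N, hN, hN0⟩ := (h.and (eventually_gt_atTop 0)).exists
  by_contra hA
  rw [Set.not_nonempty_iff_eq_empty] at hA
  subst hA
  have : (0 : ℝ) < N := by exact_mod_cast hN0
  simp only [Set.empty_inter, Set.ncard_empty, Nat.cast_zero] at hN
  nlinarith [mul_pos hc this]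

/-- Passing from discrete to continuous time: the intervals `[n, n + δ]` over a set of integers of
positive lower density fill out a set of positive lower density. -/
lemma ldensR_pos_of_Icc_subset {A : Set ℕ} (hA : 0 < ldens A) {δ : ℝ} (hδ : 0 < δ) (hδ1 : δ ≤ 1)
    {T : Set ℝ} (hT : ∀ n ∈ A, Set.Icc (n : ℝ) (n + δ) ⊆ T) : 0 < ldensR T := by
  classical
  obtain ⟨c, hc, h⟩ := (ldens_pos_iff A).1 hA
  obtain ⟨N₀, hN₀⟩ := eventually_atTop.1 h
  refine (ldensR_pos_iff T).2 ⟨δ * c / 2, by positivity, ?_⟩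
  filter_upwards [eventually_ge_atTop ((N₀ : ℝ) + 4)] with X hX
  have hN₀0 : (0 : ℝ) ≤ N₀ := N₀.cast_nonneg
  -- Intervals starting at integers up to `⌊X - 1⌋` lie in `[0, X]` since `δ ≤ 1`.
  set N := ⌊X - 1⌋₊ with hN
  have hNX : (N : ℝ) ≤ X - 1 := Nat.floor_le (by linarith)
  have hXN : X - 1 < N + 1 := Nat.lt_floor_add_one _
  have hNN : N₀ ≤ N := Nat.le_floor (by linarith)
  have hfin : (A ∩ Set.Iic N).Finite := (Set.finite_Iic N).inter_of_right A
  have hsub : (⋃ n ∈ hfin.toFinset, Set.Ico (n : ℝ) (n + δ)) ⊆ T ∩ Set.Icc 0 X := by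
    intro x hx
    simp only [Set.mem_iUnion, Set.Finite.mem_toFinset] at hx
    obtain ⟨n, ⟨hnA, hnN⟩, hx1, hx2⟩ := hx
    have : (n : ℝ) ≤ N := by exact_mod_cast hnN
    exact ⟨hT n hnA ⟨hx1, hx2.le⟩, n.cast_nonneg.trans hx1, by linarith⟩
  have hmeas : volume (⋃ n ∈ hfin.toFinset, Set.Ico (n : ℝ) (n + δ))
      = (A ∩ Set.Iic N).ncard * ENNReal.ofReal δ := by
    rw [measure_biUnion_finset]
    · simp [Set.ncard_eq_toFinset_card _ hfin]
    · intro n _ m _ hnm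
      refine Set.disjoint_left.2 fun x hx hy => hnm ?_
      have h1 : (n : ℝ) < m + 1 := by linarith [hx.1, hy.2]
      have h2 : (m : ℝ) < n + 1 := by linarith [hx.2, hy.1]
      have h1' : n < m + 1 := by exact_mod_cast h1
      have h2' : m < n + 1 := by exact_mod_cast h2
      omega
    · exact fun n _ => measurableSet_Ico
  have hle := ENNReal.toReal_mono (volume_inter_Icc_ne_top T X) (measure_mono (μ := volume) hsub)
  rw [hmeas, ENNReal.toReal_mul, ENNReal.toReal_ofReal hδ.le, ENNReal.toReal_natCast] at hle
  have h1 := hN₀ N hNN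
  calc δ * c / 2 * X = δ * (c * (X / 2)) := by ring
    _ ≤ δ * (c * N) := by gcongr; linarith
    _ ≤ δ * ((A ∩ Set.Iic N).ncard : ℝ) := by gcongr
    _ ≤ _ := by linarith

/-- Passing from continuous to discrete time: the integer parts of the elements of a set of
positive lower density form a set of positive lower density. -/
lemma ldens_floor_pos {T : Set ℝ} (hT : 0 < ldensR T) :
    0 < ldens {n : ℕ | ∃ s : ℝ, 0 ≤ s ∧ s < 1 ∧ (n : ℝ) + s ∈ T} := by
  classical
  set A : Set ℕ := {n : ℕ | ∃ s : ℝ, 0 ≤ s ∧ s < 1 ∧ (n : ℝ) + s ∈ T} with hA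
  obtain ⟨c, hc, h⟩ := (ldensR_pos_iff T).1 hT
  refine (ldens_pos_iff A).2 ⟨c, hc, ?_⟩
  filter_upwards [tendsto_natCast_atTop_atTop.eventually h] with N hN
  refine hN.trans ?_
  have hfin : (A ∩ Set.Iic N).Finite := (Set.finite_Iic N).inter_of_right A
  have hsub : T ∩ Set.Icc 0 (N : ℝ) ⊆ ⋃ n ∈ hfin.toFinset, Set.Ico (n : ℝ) (n + 1) := by
    rintro t ⟨htT, ht0, htN⟩
    simp only [Set.mem_iUnion, Set.Finite.mem_toFinset]
    have h1 := Nat.floor_le ht0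
    have h2 := Nat.lt_floor_add_one t
    refine ⟨⌊t⌋₊, ⟨⟨t - ⌊t⌋₊, by linarith, by linarith, by simpa using htT⟩, ?_⟩, h1, h2⟩
    exact Nat.floor_le_of_le htN
  have hle : volume (T ∩ Set.Icc 0 (N : ℝ)) ≤ ((A ∩ Set.Iic N).ncard : ENNReal) := by
    refine (measure_mono hsub).trans ((measure_biUnion_finset_le _ _).trans ?_)
    simp [Set.ncard_eq_toFinset_card _ hfin]
  simpa using ENNReal.toReal_mono (by simp) hle

/-- Greedy selection of a subset of `A` with gaps larger than `K`: an element of `A` is kept when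
none of the `K` preceding integers has been kept. -/
def Greedy (A : Set ℕ) (K : ℕ) (n : ℕ) : Prop :=
  n ∈ A ∧ ∀ m, (h : m < n) → n ≤ m + K → ¬ Greedy A K m
termination_by n

lemma Greedy.mem {A : Set ℕ} {K n : ℕ} (h : Greedy A K n) : n ∈ A := by
  rw [Greedy] at h
  exact h.1

lemma Greedy.gap {A : Set ℕ} {K m n : ℕ} (hn : Greedy A K n) (hm : Greedy A K m) (hmn : m < n) :
    m + K < n := by
  rw [Greedy] at hn
  by_contra! hle
  exact hn.2 m hmn hle hm

/-- The greedy selection is maximal, so it meets `[n - K, n]` for every `n ∈ A`. -/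
lemma Greedy.exists_near {A : Set ℕ} (K : ℕ) {n : ℕ} (hn : n ∈ A) :
    ∃ m, Greedy A K m ∧ m ≤ n ∧ n ≤ m + K := by
  by_cases h : Greedy A K n
  · exact ⟨n, h, le_rfl, by omega⟩
  · rw [Greedy] at h
    push Not at h
    obtain ⟨m, h1, h2, h3⟩ := h hn
    exact ⟨m, h3, h1.le, h2⟩

lemma ldens_greedy_pos {A : Set ℕ} (hA : 0 < ldens A) (K : ℕ) : 0 < ldens {n | Greedy A K n} := by
  classical
  obtain ⟨c, hc, h⟩ := (ldens_pos_iff A).1 hA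
  refine (ldens_pos_iff _).2 ⟨c / (K + 1), by positivity, ?_⟩
  filter_upwards [h] with N hN
  have hfin : ({n | Greedy A K n} ∩ Set.Iic N).Finite := (Set.finite_Iic N).inter_of_right _
  have hsub : A ∩ Set.Iic N ⊆ ((hfin.toFinset ×ˢ Finset.range (K + 1)).image
      fun x : ℕ × ℕ => x.1 + x.2 : Finset ℕ) := by
    rintro n ⟨hnA, hnN⟩
    obtain ⟨m, h1, h2, h3⟩ := Greedy.exists_near K hnA
    simp only [Finset.coe_image, Finset.coe_product, Set.mem_image]
    refine ⟨(m, n - m), ⟨?_, ?_⟩, by simp only; omega⟩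
    · simpa using ⟨h1, h2.trans hnN⟩
    · simp only [Finset.coe_range, Set.mem_Iio]; omega
  have h1 := Set.ncard_le_ncard hsub (Finset.finite_toSet _)
  rw [Set.ncard_coe_finset] at h1
  have h2 := h1.trans Finset.card_image_le
  rw [Finset.card_product, Finset.card_range, ← Set.ncard_eq_toFinset_card _ hfin] at h2
  have h3 : ((A ∩ Set.Iic N).ncard : ℝ)
      ≤ (({n | Greedy A K n} ∩ Set.Iic N).ncard : ℝ) * (K + 1) := by exact_mod_cast h2
  rw [div_mul_eq_mul_div, div_le_iff₀ (by positivity)]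
  exact hN.trans h3

/-! ### Regularity of the weight -/

/-- Admissibility in the form used below: over bounded time, the weight decreases at most by a
bounded factor. -/
lemma AdmissibleH.le_mul {ρ : ℝ → ℝ} (hρ : AdmissibleH ρ) (L : ℝ) :
    ∃ A : ℝ, 1 ≤ A ∧ ∀ x t : ℝ, 0 ≤ x → 0 ≤ t → t ≤ L → ρ x ≤ A * ρ (x + t) := by
  obtain ⟨-, hpos, M, hM, ω, h⟩ := hρ
  refine ⟨M * Real.exp (|ω| * |L|), ?_, fun x t hx ht htL => ?_⟩
  · exact one_le_mul_of_one_le_of_one_le hM (Real.one_le_exp (by positivity))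
  · have hp := hpos (x + t) (by linarith)
    have hmono : M * Real.exp (ω * t) * ρ (x + t)
        ≤ M * Real.exp (|ω| * |L|) * ρ (x + t) := by
      have : ω * t ≤ |ω| * |L| := by
        calc ω * t ≤ |ω| * t := by gcongr; exact le_abs_self ω
          _ ≤ |ω| * |L| := by gcongr; exact htL.trans (le_abs_self L)
      gcongr
    rcases ht.eq_or_lt with rfl | ht'
    · refine le_trans ?_ hmono
      simp only [mul_zero, Real.exp_zero, mul_one, add_zero] at hp ⊢
      nlinarith
    · exact (h x hx t ht').trans hmono

/-- Together, admissibility and the bound on `ρ(k+1)/ρ(k)` make the weight vary at most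
exponentially, upwards and downwards. -/
lemma AdmissibleH.exists_pow {ρ : ℝ → ℝ} (hρ : AdmissibleH ρ)
    (hsup : ∃ C : ℝ, ∀ k : ℕ, ρ ((k : ℝ) + 1) / ρ (k : ℝ) ≤ C) :
    ∃ D : ℝ, 1 ≤ D ∧ ∀ k : ℕ, ∀ a b : ℝ, 0 ≤ a → 0 ≤ b → |a - b| ≤ k → ρ a ≤ D ^ k * ρ b := by
  obtain ⟨C, hC⟩ := hsup
  obtain ⟨A, hA1, hA⟩ := hρ.le_mul 2
  have hpos := hρ.2.1
  have hC0 : 0 < C := lt_of_lt_of_le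
    (div_pos (hpos _ (by positivity)) (hpos _ (by positivity))) (hC 0)
  have hstep : ∀ k : ℕ, ρ ((k : ℝ) + 1) ≤ C * ρ k := fun k =>
    (div_le_iff₀ (hpos _ k.cast_nonneg)).1 (hC k)
  -- Compare `ρ (x + s)` with `ρ x` through the integers `⌊x⌋ + 2` and `⌊x⌋`.
  have hup : ∀ x s : ℝ, 0 ≤ x → 0 ≤ s → s ≤ 1 → ρ (x + s) ≤ A * (C * (C * A)) * ρ x := by
    intro x s hx hs hs1
    have h1 := Nat.floor_le hx
    have h2 := Nat.lt_floor_add_one x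
    set k := ⌊x⌋₊
    have e1 := hA (x + s) ((k : ℝ) + 2 - (x + s)) (by linarith) (by linarith) (by linarith)
    have e2 := hstep (k + 1)
    have e3 := hstep k
    have e4 := hA k (x - k) k.cast_nonneg (by linarith) (by linarith)
    rw [show x + s + ((k : ℝ) + 2 - (x + s)) = k + 1 + 1 by ring] at e1
    rw [add_sub_cancel] at e4
    push_cast at e2
    calc ρ (x + s) ≤ A * ρ (k + 1 + 1) := e1
      _ ≤ A * (C * (C * (A * ρ x))) := by
        gcongr
        refine e2.trans ?_
        gcongr
        refine e3.trans ?_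
        gcongr
      _ = _ := by ring
  obtain ⟨D, hD⟩ : ∃ D, D = max A (A * (C * (C * A))) := ⟨_, rfl⟩
  have hD1 : 1 ≤ D := hD ▸ hA1.trans (le_max_left _ _)
  have hone : ∀ a b : ℝ, 0 ≤ a → 0 ≤ b → |a - b| ≤ 1 → ρ a ≤ D * ρ b := by
    intro a b ha hb hab
    have hb' := hpos b hb
    rw [abs_le] at hab
    rcases le_total a b with hle | hle
    · have := hA a (b - a) ha (by linarith) (by linarith)
      rw [add_sub_cancel] at this
      refine this.trans ?_
      gcongr
      exact hD ▸ le_max_left _ _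
    · have := hup b (a - b) hb (by linarith) (by linarith)
      rw [add_sub_cancel] at this
      refine this.trans ?_
      gcongr
      exact hD ▸ le_max_right _ _
  refine ⟨D, hD1, fun k => ?_⟩
  induction k with
  | zero =>
    intro a b ha hb hab
    have : a - b = 0 := by simpa using hab
    rw [sub_eq_zero.1 this]
    simp
  | succ k ih =>
    intro a b ha hb hab
    push_cast at hab
    have hk : (0 : ℝ) < k + 1 := by positivity
    -- The intermediate point at distance at most `1` from `a` and at most `k` from `b`.
    set c := (k / (k + 1)) * a + (1 / (k + 1)) * b with hc
    have hc0 : 0 ≤ c := by positivity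
    have h1 : |a - c| ≤ 1 := by
      have : a - c = (a - b) / (k + 1) := by rw [hc]; field_simp; ring
      rw [this, abs_div, abs_of_pos hk, div_le_one hk]
      exact hab
    have h2 : |c - b| ≤ k := by
      have : c - b = k * ((a - b) / (k + 1)) := by rw [hc]; field_simp; ring
      rw [this, abs_mul, abs_div, abs_of_pos hk, Nat.abs_cast]
      exact mul_le_of_le_one_right k.cast_nonneg ((div_le_one hk).2 hab)
    calc ρ a ≤ D * ρ c := hone a c ha hc0 h1
      _ ≤ D * (D ^ k * ρ b) := by gcongr; exact ih c b hc0 hb h2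
      _ = D ^ (k + 1) * ρ b := by ring

/-! ### From frequent hypercyclicity to the sets `E_p` -/

/-- Take as `E p` the (thinned) integer times at which the orbit of a frequently hypercyclic vector
is close to a plateau of height `v p` followed by `0`. The conditions hold with `M p = p + 1`: the
heights identify `p`, and the smallness of the orbit after the plateau of `n`, compared with the
height at the plateau of a later `m`, bounds `ρ (m - n)`. -/
lemma exists_cond6_of_FH {ρ : ℝ → ℝ} (hρ : AdmissibleH ρ) (h : FHTransC0H ρ) :
    ∃ M : ℕ → ℝ, GoodM M ∧ ∃ E : ℕ → Set ℕ, Cond6 ρ M E := by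
  obtain ⟨f, ⟨-, hf0⟩, hf⟩ := h
  have hpos := hρ.2.1
  obtain ⟨B, hB1, hB⟩ := hρ.le_mul 8
  -- A positive lower bound for the weight on `[0, p + 10]`.
  have hr : ∀ p : ℕ, ∃ r : ℝ, 0 < r ∧ ∀ x : ℝ, 0 ≤ x → x ≤ p + 10 → r ≤ ρ x := by
    intro p
    obtain ⟨A, hA1, hA⟩ := hρ.le_mul (p + 10)
    refine ⟨ρ 0 / A, div_pos (hpos 0 le_rfl) (by linarith), fun x hx hxp => ?_⟩
    rw [div_le_iff₀ (by linarith)]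
    have := hA 0 x le_rfl hx hxp
    rw [zero_add] at this
    linarith
  choose r hr0 hr using hr
  -- The target `g p` has a plateau of height `v p` on `[0, p + 10]` and vanishes after `p + 11`.
  set v : ℕ → ℝ := fun p => (p + 1) * (2 * B) with hv
  set g : ℕ → ℝ → ℝ := fun p x => v p * max 0 (min 1 (p + 11 - x)) with hg
  set ε : ℕ → ℝ := fun p => min (1 / (p + 1)) (r p / 4) with hε
  have hε0 : ∀ p, 0 < ε p := fun p => lt_min (by positivity) (by linarith [hr0 p])
  have hgpl : ∀ (p : ℕ) (x : ℝ), x ≤ p + 10 → g p x = v p := by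
    intro p x hx
    simp only [hg]
    rw [min_eq_left (by linarith), max_eq_right zero_le_one, mul_one]
  have hgz : ∀ (p : ℕ) (x : ℝ), (p : ℝ) + 11 ≤ x → g p x = 0 := by
    intro p x hx
    simp only [hg]
    rw [max_eq_left ((min_le_right _ _).trans (by linarith)), mul_zero]
  have hgmem : ∀ p, MemC0rhoH ρ (g p) := by
    intro p
    refine ⟨Continuous.continuousOn (by simp only [hg]; fun_prop), ?_⟩
    refine tendsto_const_nhds.congr' ?_
    filter_upwards [eventually_ge_atTop ((p : ℝ) + 11)] with x hx
    rw [hgz p x hx, zero_mul]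
  set T : ℕ → Set ℝ := fun p =>
    {t : ℝ | 0 ≤ t ∧ ∀ x : ℝ, 0 ≤ x → |f (x + t) - g p x| * ρ x ≤ ε p} with hT
  have hTpos : ∀ p, 0 < ldensR (T p) := fun p => hf (g p) (hgmem p) (ε p) (hε0 p)
  set A : ℕ → Set ℕ := fun p => {n : ℕ | ∃ s : ℝ, 0 ≤ s ∧ s < 1 ∧ (n : ℝ) + s ∈ T p} with hA
  set E : ℕ → Set ℕ := fun p => {n | Greedy (A p) (p + 4) n} with hE
  -- On the plateau following `n ∈ E p`, the function `f` identifies `p`.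
  have hplat : ∀ p, ∀ n ∈ E p, ∀ y : ℝ, (n : ℝ) + 1 ≤ y → y ≤ n + p + 10 →
      |f y - v p| ≤ 1 / 4 := by
    intro p n hn y hy1 hy2
    obtain ⟨s, hs0, hs1, -, hs⟩ := Greedy.mem hn
    have h1 := hs (y - (n + s)) (by linarith)
    rw [sub_add_cancel, hgpl p _ (by linarith)] at h1
    have h2 := hr p (y - (n + s)) (by linarith) (by linarith)
    have h3 : ε p ≤ r p / 4 := min_le_right _ _
    have h4 : |f y - v p| * r p ≤ r p / 4 :=
      (mul_le_mul_of_nonneg_left h2 (abs_nonneg _)).trans (h1.trans h3)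
    have h5 := hr0 p
    by_contra! hcon
    nlinarith
  have hv1 : ∀ p, 2 ≤ v p := fun p => by
    have : (0 : ℝ) ≤ p := p.cast_nonneg
    simp only [hv]
    nlinarith
  have hvne : ∀ p q : ℕ, p < q → v p + 1 ≤ v q := by
    intro p q hpq
    have : (p : ℝ) + 1 ≤ q := by exact_mod_cast hpq
    simp only [hv]
    nlinarith
  have hsep : ∀ p q : ℕ, p ≠ q → ∀ n ∈ E p, ∀ m ∈ E q, ∀ y : ℝ, (n : ℝ) + 1 ≤ y →
      y ≤ n + p + 10 → (m : ℝ) + 1 ≤ y → y ≤ m + q + 10 → False := by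
    intro p q hpq n hn m hm y h1 h2 h3 h4
    have e1 := abs_le.1 (hplat p n hn y h1 h2)
    have e2 := abs_le.1 (hplat q m hm y h3 h4)
    rcases lt_or_gt_of_ne hpq with hlt | hlt
    · linarith [hvne p q hlt, e1.1, e1.2, e2.1, e2.2]
    · linarith [hvne q p hlt, e1.1, e1.2, e2.1, e2.2]
  refine ⟨fun p => (p : ℝ) + 1, ⟨fun p => by positivity, ?_⟩, E, ?_, ?_, ?_, ?_⟩
  · exact tendsto_atTop_add_const_right _ _ tendsto_natCast_atTop_atTop
  · exact fun p _ => ldens_greedy_pos (ldens_floor_pos (hTpos p)) _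
  · intro p q _ _ hpq n hn m hm j k hj hk hnm
    have hj' : (j : ℝ) ≤ p := by exact_mod_cast hj
    have hk' : (k : ℝ) ≤ q := by exact_mod_cast hk
    have hnm' : (n : ℝ) + j = m + k := by exact_mod_cast hnm
    have hj0 : (0 : ℝ) ≤ j := j.cast_nonneg
    have hk0 : (0 : ℝ) ≤ k := k.cast_nonneg
    exact hsep p q hpq n hn m hm (n + j + 1) (by linarith) (by linarith) (by linarith)
      (by linarith)
  · -- `f ≥ 1` on the plateaus, so `f ρ → 0` forces `ρ → 0` along `E p`.
    intro p _
    have hshift : Tendsto (fun n : ℕ => (n : ℝ) + 1) atTop atTop :=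
      tendsto_atTop_add_const_right _ _ tendsto_natCast_atTop_atTop
    have h1 : Tendsto (fun n : ℕ => B * (f ((n : ℝ) + 1) * ρ ((n : ℝ) + 1)))
        (atTop ⊓ principal (E p)) (nhds 0) := by
      have := ((hf0.comp hshift).const_mul B).mono_left (inf_le_left (b := principal (E p)))
      simpa using this
    refine squeeze_zero' (Eventually.of_forall fun n => (hpos _ n.cast_nonneg).le) ?_ h1
    filter_upwards [mem_inf_of_right (mem_principal_self (E p))] with n hn
    have e1 := abs_le.1 (hplat p n hn (n + 1) le_rfl (by linarith [p.cast_nonneg (α := ℝ)]))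
    have e2 := hB n 1 n.cast_nonneg zero_le_one (by norm_num)
    have e3 := hpos ((n : ℝ) + 1) (by positivity)
    have e4 : 1 ≤ f ((n : ℝ) + 1) := by linarith [hv1 p, e1.1]
    refine e2.trans ?_
    have : ρ ((n : ℝ) + 1) ≤ f ((n : ℝ) + 1) * ρ ((n : ℝ) + 1) := by nlinarith
    gcongr
  · intro p q _ _ n hn m hm hnm
    -- Nearby elements are excluded by the gaps when `p = q` and by the plateaus when `p ≠ q`.
    have hfar : n + (p + 4) < m := by
      by_cases hpq : p = q
      · subst hpq
        exact Greedy.gap hm hn hnm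
      · by_contra! hle
        have hle' : (m : ℝ) ≤ n + (p + 4) := by exact_mod_cast hle
        have hnm' : (n : ℝ) ≤ m := by exact_mod_cast hnm.le
        exact hsep p q hpq n hn m hm (m + 1) (by linarith) (by linarith) le_rfl
          (by linarith [q.cast_nonneg (α := ℝ)])
    have hfar' : (n : ℝ) + (p + 4) ≤ m := by exact_mod_cast hfar.le
    have hp0 : (0 : ℝ) ≤ p := p.cast_nonneg
    have hq0 : (0 : ℝ) ≤ q := q.cast_nonneg
    obtain ⟨s, hs0, hs1, -, hs⟩ := Greedy.mem hn
    -- The point `m + 8` is on the plateau of `m` and beyond the support of the bump at `n + s`.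
    have h1 := hs (m + 8 - (n + s)) (by linarith)
    rw [sub_add_cancel, hgz p _ (by linarith), sub_zero] at h1
    have h2 := (abs_le.1 (hplat q m hm (m + 8) (by linarith) (by linarith))).1
    have h3 := hB ((m : ℝ) - n) (8 - s) (by linarith) (by linarith) (by linarith)
    rw [show (m : ℝ) - n + (8 - s) = m + 8 - (n + s) by ring] at h3
    have h4 := hpos ((m : ℝ) + 8 - (n + s)) (by linarith)
    set R := ρ ((m : ℝ) + 8 - (n + s))
    have h5 : (q + 1) * B ≤ |f (m + 8)| := by
      refine le_trans ?_ (le_abs_self _)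
      have := hv1 q
      simp only [hv] at h2 this
      nlinarith
    have h6 : ε p ≤ 1 / (p + 1) := min_le_left _ _
    have h7 : (q + 1) * B * R ≤ 1 / (p + 1) :=
      (mul_le_mul_of_nonneg_right h5 h4.le).trans (h1.trans h6)
    rw [le_div_iff₀ (by positivity)] at h7
    rw [le_div_iff₀ (by positivity)]
    calc ρ ((m : ℝ) - n) * ((p + 1) * (q + 1)) ≤ B * R * ((p + 1) * (q + 1)) := by gcongr
      _ = (q + 1) * B * R * (p + 1) := by ring
      _ ≤ 1 := h7

/-! ### A countable dense family of bumps -/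

/-- The piecewise affine cutoff: `1` on `[0, k]`, `0` outside `(-1, k + 1)`. -/
noncomputable def cutoff (k : ℕ) (x : ℝ) : ℝ := max 0 (min 1 (min (x + 1) (k + 1 - x)))

lemma cutoff_continuous (k : ℕ) : Continuous (cutoff k) := by
  unfold cutoff
  fun_prop

lemma cutoff_nonneg (k : ℕ) (x : ℝ) : 0 ≤ cutoff k x := le_max_left _ _

lemma cutoff_le_one (k : ℕ) (x : ℝ) : cutoff k x ≤ 1 := max_le zero_le_one (min_le_left _ _)

lemma cutoff_eq_one {k : ℕ} {x : ℝ} (h0 : 0 ≤ x) (h : x ≤ k) : cutoff k x = 1 := by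
  unfold cutoff
  rw [min_eq_left (le_min (by linarith) (by linarith)), max_eq_right zero_le_one]

lemma cutoff_eq_zero_of_le {k : ℕ} {x : ℝ} (h : x ≤ -1) : cutoff k x = 0 :=
  max_eq_left ((min_le_right _ _).trans ((min_le_left _ _).trans (by linarith)))

lemma cutoff_eq_zero_of_ge {k : ℕ} {x : ℝ} (h : (k : ℝ) + 1 ≤ x) : cutoff k x = 0 :=
  max_eq_left ((min_le_right _ _).trans ((min_le_right _ _).trans (by linarith)))

/-- The `p`-th bump: an element of a fixed dense sequence of `C(ℝ, ℝ)` times a cutoff, the two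
indices being read off the first component of `p` under the pairing of `ℕ × ℕ` with `ℕ`. Every
such product occurs for arbitrarily large `p`, because the second component is ignored. -/
noncomputable def bump (p : ℕ) (x : ℝ) : ℝ :=
  TopologicalSpace.denseSeq C(ℝ, ℝ) p.unpair.1.unpair.1 x * cutoff p.unpair.1.unpair.2 x

lemma bump_continuous (p : ℕ) : Continuous (bump p) := by
  unfold bump
  exact (map_continuous _).mul (cutoff_continuous _)

lemma bump_eq_zero_of_le {p : ℕ} {x : ℝ} (h : x ≤ -1) : bump p x = 0 := by
  rw [bump, cutoff_eq_zero_of_le h, mul_zero]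

lemma bump_eq_zero_of_ge {p : ℕ} {x : ℝ} (h : (p : ℝ) + 1 ≤ x) : bump p x = 0 := by
  have : ((p.unpair.1.unpair.2 : ℕ) : ℝ) ≤ p := by
    exact_mod_cast (Nat.unpair_right_le _).trans (Nat.unpair_left_le _)
  rw [bump, cutoff_eq_zero_of_ge (by linarith), mul_zero]

lemma bump_hasCompactSupport (p : ℕ) : HasCompactSupport (bump p) := by
  refine HasCompactSupport.intro (isCompact_Icc (a := (-1 : ℝ)) (b := p + 1)) fun x hx => ?_
  rw [Set.mem_Icc, not_and_or, not_le, not_le] at hx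
  rcases hx with h | h
  · exact bump_eq_zero_of_le h.le
  · exact bump_eq_zero_of_ge h.le

lemma bump_bounded (p : ℕ) : ∃ b : ℝ, 1 ≤ b ∧ ∀ x, |bump p x| ≤ b := by
  obtain ⟨C, hC⟩ := (bump_hasCompactSupport p).exists_bound_of_continuous (bump_continuous p)
  exact ⟨max 1 C, le_max_left _ _, fun x => (hC x).trans (le_max_right _ _)⟩

/-- The bumps are dense in `C₀^ρ([0,∞))`, and so are those with index at least `N`. Only the
boundedness of the weight on compact sets matters here. -/
lemma exists_bump_near {ρ : ℝ → ℝ} (hpos : ∀ x, 0 ≤ x → 0 < ρ x)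
    (hbdd : ∀ L : ℕ, ∃ R : ℝ, 0 < R ∧ ∀ x : ℝ, 0 ≤ x → x ≤ L → ρ x ≤ R)
    {g : ℝ → ℝ} (hg : MemC0rhoH ρ g) {ε : ℝ} (hε : 0 < ε) (N : ℕ) :
    ∃ p, N ≤ p ∧ ∀ x, 0 ≤ x → |bump p x - g x| * ρ x ≤ ε := by
  obtain ⟨hgc, hg0⟩ := hg
  have hsmall : ∀ᶠ x : ℝ in atTop, |g x| * ρ x ≤ ε / 2 := by
    have h1 := hg0.abs
    rw [abs_zero] at h1
    filter_upwards [h1.eventually_le_const (half_pos hε), eventually_ge_atTop 0] with x hx hx0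
    rwa [abs_mul, abs_of_pos (hpos x hx0)] at hx
  obtain ⟨X, hX⟩ := eventually_atTop.1 hsmall
  obtain ⟨k, hk⟩ := exists_nat_ge X
  obtain ⟨R, hR0, hR⟩ := hbdd (k + 1)
  push_cast at hR
  -- The extension of `g` to the whole line by the constant `g 0`.
  let G : C(ℝ, ℝ) := ⟨fun x => g (max x 0),
    hgc.comp_continuous (by fun_prop) fun x => le_max_right x 0⟩
  have hGg : ∀ x, 0 ≤ x → G x = g x := fun x hx => by
    change g (max x 0) = g x
    rw [max_eq_left hx]
  have hη : 0 < ε / (2 * R) := by positivity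
  have hnear : ∀ᶠ u : C(ℝ, ℝ) in nhds G, ∀ x ∈ Set.Icc (0 : ℝ) (k + 1),
      dist (G x) (u x) < ε / (2 * R) := by
    have h1 := ContinuousMap.tendsto_iff_forall_isCompact_tendstoUniformlyOn.1
      (tendsto_id (x := nhds G)) (Set.Icc (0 : ℝ) (k + 1)) isCompact_Icc
    exact Metric.tendstoUniformlyOn_iff.1 h1 _ hη
  obtain ⟨_, ⟨i, rfl⟩, hu⟩ :=
    (TopologicalSpace.denseRange_denseSeq C(ℝ, ℝ)).inter_nhds_nonempty hnear
  refine ⟨Nat.pair (Nat.pair i k) N, Nat.right_le_pair _ _, fun x hx => ?_⟩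
  have hρx := hpos x hx
  simp only [bump, Nat.unpair_pair]
  set w := TopologicalSpace.denseSeq C(ℝ, ℝ) i
  have hu' : ∀ y : ℝ, 0 ≤ y → y ≤ k + 1 → |w y - g y| * ρ y ≤ ε / 2 := by
    intro y hy hyk
    have h1 := hu y ⟨hy, hyk⟩
    rw [dist_comm, Real.dist_eq, hGg y hy] at h1
    calc |w y - g y| * ρ y ≤ ε / (2 * R) * R := by
          gcongr
          · exact (hpos y hy).le
          · exact hR y hy hyk
      _ = ε / 2 := by field_simp
  rcases le_total x (k + 1) with h1 | h1
  · rcases le_total x k with h2 | h2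
    · rw [cutoff_eq_one hx h2, mul_one]
      exact (hu' x hx h1).trans (by linarith)
    · have e1 := hu' x hx h1
      have e2 := hX x (hk.trans h2)
      have c0 := cutoff_nonneg k x
      have c1 := cutoff_le_one k x
      -- On the transition interval, split the difference as a convex combination.
      calc |w x * cutoff k x - g x| * ρ x
          = |cutoff k x * (w x - g x) + (1 - cutoff k x) * -g x| * ρ x := by
            congr 2; ring
        _ ≤ (1 * |w x - g x| + 1 * |g x|) * ρ x := by
            gcongr
            refine (abs_add_le _ _).trans ?_
            rw [abs_mul, abs_mul, abs_neg, abs_of_nonneg c0, abs_of_nonneg (sub_nonneg.2 c1)]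
            gcongr
            linarith
        _ ≤ ε := by linarith
  · rw [cutoff_eq_zero_of_ge h1, mul_zero, zero_sub, abs_neg]
    exact (hX x (hk.trans (by linarith))).trans (by linarith)

/-! ### From the sets `E_p` to frequent hypercyclicity -/

/-- The conditions do not depend on the sequence `M`: passing to a subsequence of `(E_p)` makes
`M` grow as fast as desired. -/
lemma cond6_of_cond6 {ρ : ℝ → ℝ} {M : ℕ → ℝ} (hM : GoodM M) {E : ℕ → Set ℕ} (hE : Cond6 ρ M E)
    {M' : ℕ → ℝ} (hM' : GoodM M') : ∃ E' : ℕ → Set ℕ, Cond6 ρ M' E' := by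
  obtain ⟨φ, hφ, hφM⟩ := extraction_forall_of_eventually
    (P := fun p k => M' p ≤ M k) fun p => hM.2.eventually_ge_atTop (M' p)
  obtain ⟨ha, hb, hc, hd⟩ := hE
  have hle : ∀ p, p ≤ φ p := hφ.id_le
  refine ⟨fun p => E (φ p), fun p hp => ha _ (hp.trans (hle p)), ?_,
    fun p hp => hc _ (hp.trans (hle p)), ?_⟩
  · intro p q hp hq hpq n hn m hm j k hj hk
    exact hb _ _ (hp.trans (hle p)) (hq.trans (hle q)) (hφ.injective.ne hpq) n hn m hm j k
      (hj.trans (hle p)) (hk.trans (hle q))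
  · intro p q hp hq n hn m hm hnm
    refine (hd _ _ (hp.trans (hle p)) (hq.trans (hle q)) n hn m hm hnm).trans ?_
    have h1 := hM'.1 p
    have h2 := hM'.1 q
    exact one_div_le_one_div_of_le (mul_pos h1 h2)
      (mul_le_mul (hφM p) (hφM q) h2.le (hM.1 _).le)

/-- A superposition `f` of translated bumps, one copy of `bump p` at each `n ∈ E p`. When `n ∈ E p`
is followed in `⋃ E p` only by integers larger than `n + p + 2`, the bumps do not overlap, so every
value of `f` is the value of a single bump. -/
lemma exists_superposition {E : ℕ → Set ℕ}
    (hdisj : ∀ p q : ℕ, 1 ≤ p → 1 ≤ q → ∀ n ∈ E p, n ∈ E q → p = q)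
    (hgap : ∀ p q : ℕ, 1 ≤ p → 1 ≤ q → ∀ n ∈ E p, ∀ m ∈ E q, n < m → n + p + 2 < m) :
    ∃ f : ℝ → ℝ, Continuous f ∧
      (∀ p, 1 ≤ p → ∀ n ∈ E p, ∀ x : ℝ, bump p (x - n) ≠ 0 → f x = bump p (x - n)) ∧
      (∀ x, f x ≠ 0 → ∃ p, 1 ≤ p ∧ ∃ n ∈ E p, bump p (x - n) ≠ 0 ∧ f x = bump p (x - n)) := by
  classical
  have hP : ∀ n : ℕ, ∃ p : ℕ, ∀ q, 1 ≤ q → n ∈ E q → p = q := by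
    intro n
    by_cases h : ∃ p, 1 ≤ p ∧ n ∈ E p
    · obtain ⟨p, hp, hn⟩ := h
      exact ⟨p, fun q hq hnq => hdisj p q hp hq n hn hnq⟩
    · push Not at h
      exact ⟨0, fun q hq hnq => absurd hnq (h q hq)⟩
  choose P hP using hP
  set H : ℕ → ℝ → ℝ := fun n x =>
    if 1 ≤ P n ∧ n ∈ E (P n) then bump (P n) (x - n) else 0 with hH
  have hHE : ∀ p, 1 ≤ p → ∀ n ∈ E p, ∀ x, H n x = bump p (x - n) := by
    intro p hp n hn x
    have h1 := hP n p hp hn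
    simp only [hH]
    rw [if_pos (by rw [h1]; exact ⟨hp, hn⟩), h1]
  have hHne : ∀ n x, H n x ≠ 0 → ∃ p, 1 ≤ p ∧ n ∈ E p ∧ H n x = bump p (x - n) ∧
      (n : ℝ) - 1 < x ∧ x < n + p + 1 := by
    intro n x hx
    by_cases h : 1 ≤ P n ∧ n ∈ E (P n)
    · have h1 := hHE _ h.1 n h.2 x
      rw [h1] at hx
      refine ⟨P n, h.1, h.2, h1, ?_, ?_⟩
      · by_contra! hle
        exact hx (bump_eq_zero_of_le (by linarith))
      · by_contra! hle
        exact hx (bump_eq_zero_of_ge (by linarith))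
    · exact absurd (if_neg h) hx
  have hlt : ∀ n m x, n < m → H n x ≠ 0 → H m x = 0 := by
    intro n m x hnm hn
    by_contra hm
    obtain ⟨p, hp, hnp, -, -, h1⟩ := hHne n x hn
    obtain ⟨q, hq, hmq, -, h2, -⟩ := hHne m x hm
    have h3 : (n : ℝ) + p + 2 < m := by exact_mod_cast hgap p q hp hq n hnp m hmq hnm
    linarith
  have hone : ∀ n x, H n x ≠ 0 → ∑ᶠ m, H m x = H n x := by
    intro n x hn
    refine finsum_eq_single _ n fun m hm => ?_
    rcases lt_or_gt_of_ne hm with h | h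
    · by_contra hne
      exact hn (hlt m n x h hne)
    · exact hlt n m x h hn
  refine ⟨fun x => ∑ᶠ n, H n x, ?_, ?_, ?_⟩
  · refine continuous_finsum (fun n => ?_) fun y => ?_
    · by_cases h : 1 ≤ P n ∧ n ∈ E (P n)
      · have : H n = fun x => bump (P n) (x - n) := funext fun x => if_pos h
        rw [this]
        exact (bump_continuous _).comp (by fun_prop)
      · have : H n = fun _ => 0 := funext fun x => if_neg h
        rw [this]
        exact continuous_const
    · -- Below `y + 1`, only the bumps starting at integers `n < y + 2` contribute.
      refine ⟨Set.Iio (y + 1), Iio_mem_nhds (by linarith), ?_⟩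
      refine (Set.finite_Iic ⌈y + 2⌉₊).subset ?_
      rintro n ⟨x, hx, hxy⟩
      obtain ⟨-, -, -, -, h1, -⟩ := hHne n x hx
      have h2 : x < y + 1 := hxy
      have h3 : (n : ℝ) ≤ ⌈y + 2⌉₊ := by linarith [Nat.le_ceil (y + 2)]
      exact_mod_cast h3
  · intro p hp n hn x hx
    rw [← hHE p hp n hn] at hx ⊢
    exact hone n x hx
  · intro x hx
    obtain ⟨n, hn⟩ : ∃ n, H n x ≠ 0 := by
      by_contra! h
      exact hx (by simp [h])
    obtain ⟨p, hp, hnp, h1, -, -⟩ := hHne n x hn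
    refine ⟨p, hp, n, hnp, h1 ▸ hn, ?_⟩
    rw [← h1]
    exact hone n x hn

lemma bump_ne_zero_bounds {p : ℕ} {x : ℝ} (h : bump p x ≠ 0) : -1 < x ∧ x < p + 1 := by
  constructor
  · by_contra! hle
    exact h (bump_eq_zero_of_le hle)
  · by_contra! hle
    exact h (bump_eq_zero_of_ge hle)

/-- The function `f` of the superposition lemma, built for a fast growing `M`, is a frequently
hypercyclic vector: at times `t` slightly larger than `n ∈ E p`, the orbit is close to `bump p`,
since by (d) the bumps further on have small weighted norm when seen from `n`. -/
lemma FH_of_cond6 {ρ : ℝ → ℝ} (hρ : AdmissibleH ρ)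
    (hsup : ∃ C : ℝ, ∀ k : ℕ, ρ ((k : ℝ) + 1) / ρ (k : ℝ) ≤ C)
    (h : ∃ M : ℕ → ℝ, GoodM M ∧ ∃ E : ℕ → Set ℕ, Cond6 ρ M E) : FHTransC0H ρ := by
  have hpos := hρ.2.1
  obtain ⟨D, hD1, hD⟩ := hρ.exists_pow hsup
  have hD0 : 0 < D := by linarith
  have hρ0 := hpos 0 le_rfl
  choose b hb1 hb using bump_bounded
  have hb0 : ∀ p, 0 < b p := fun p => by linarith [hb1 p]
  -- The first term of `M` absorbs the size of the bumps, the second one forces gaps in `⋃ E p`.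
  obtain ⟨M, hMdef⟩ : ∃ M : ℕ → ℝ, M = fun p : ℕ =>
    ((p : ℝ) + 1) * (b p * D ^ (p + 2)) + D ^ (p + 2) / ρ 0 := ⟨_, rfl⟩
  have hM1 : ∀ p : ℕ, ((p : ℝ) + 1) * (b p * D ^ (p + 2)) ≤ M p := fun p => by
    rw [hMdef]
    have : 0 < D ^ (p + 2) / ρ 0 := by positivity
    simp only
    linarith
  have hbD : ∀ p, 1 ≤ b p * D ^ (p + 2) := fun p =>
    one_le_mul_of_one_le_of_one_le (hb1 p) (one_le_pow₀ hD1)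
  have hMp : ∀ p : ℕ, (p : ℝ) + 1 ≤ M p := fun p =>
    (le_mul_of_one_le_right (by positivity) (hbD p)).trans (hM1 p)
  have hM11 : ∀ p, 1 ≤ M p := fun p => by linarith [hMp p, p.cast_nonneg (α := ℝ)]
  have hM0 : ∀ p, 0 < M p := fun p => by linarith [hM11 p]
  have hM2 : ∀ p, D ^ (p + 2) < M p * ρ 0 := fun p => by
    have h1 := hb0 p
    have h2 : 0 < ((p : ℝ) + 1) * (b p * D ^ (p + 2)) * ρ 0 := by positivity
    have h3 : M p * ρ 0 = ((p : ℝ) + 1) * (b p * D ^ (p + 2)) * ρ 0 + D ^ (p + 2) := by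
      rw [hMdef]; field_simp
    linarith
  have hbM : ∀ p, b p * D ^ (p + 2) / M p ≤ 1 / (p + 1) := fun p => by
    rw [div_le_div_iff₀ (hM0 p) (by positivity)]
    linarith [hM1 p]
  have hMgood : GoodM M := ⟨hM0, tendsto_atTop_mono hMp
    (tendsto_atTop_add_const_right _ _ tendsto_natCast_atTop_atTop)⟩
  obtain ⟨M₀, hM₀, E₀, hE₀⟩ := h
  obtain ⟨E, ha, hbE, hc, hd⟩ := cond6_of_cond6 hM₀ hE₀ hMgood
  have hdisj : ∀ p q : ℕ, 1 ≤ p → 1 ≤ q → ∀ n ∈ E p, n ∈ E q → p = q := by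
    intro p q hp hq n hn hm
    by_contra hpq
    exact hbE p q hp hq hpq n hn n hm 0 0 (Nat.zero_le _) (Nat.zero_le _) rfl
  have hgap : ∀ p q : ℕ, 1 ≤ p → 1 ≤ q → ∀ n ∈ E p, ∀ m ∈ E q, n < m → n + p + 2 < m := by
    intro p q hp hq n hn m hm hnm
    have h1 := hd p q hp hq n hn m hm hnm
    have hmn : (n : ℝ) ≤ m := by exact_mod_cast hnm.le
    by_contra! hle
    have hle' : (m : ℝ) ≤ n + p + 2 := by exact_mod_cast hle
    have h2 := hD (p + 2) 0 ((m : ℝ) - n) le_rfl (by linarith) (by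
      rw [zero_sub, abs_neg, abs_of_nonneg (by linarith)]; push_cast; linarith)
    have h3 : ρ ((m : ℝ) - n) ≤ 1 / M p := h1.trans
      (one_div_le_one_div_of_le (hM0 p) (le_mul_of_one_le_right (hM0 p).le (hM11 q)))
    have h4 : ρ 0 ≤ D ^ (p + 2) * (1 / M p) := h2.trans (by gcongr)
    rw [mul_one_div, le_div_iff₀ (hM0 p)] at h4
    linarith [hM2 p]
  obtain ⟨f, hfc, hfE, hfne⟩ := exists_superposition hdisj hgap
  -- The weighted size of a bump, in terms of the weight at its starting point.
  have hsize : ∀ q : ℕ, ∀ x y : ℝ, 0 ≤ x → 0 ≤ y → bump q (x - y) ≠ 0 →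
      |bump q (x - y)| * ρ x ≤ b q * D ^ (q + 2) * ρ y := by
    intro q x y hx hy hne
    obtain ⟨h1, h2⟩ := bump_ne_zero_bounds hne
    have hq : (0 : ℝ) ≤ q := q.cast_nonneg
    have h3 := hD (q + 2) x y hx hy (by push_cast; rw [abs_le]; constructor <;> linarith)
    calc |bump q (x - y)| * ρ x ≤ b q * (D ^ (q + 2) * ρ y) := by
          have := (hpos x hx).le
          have := (hb0 q).le
          gcongr
          exact hb q _
      _ = _ := by ring
  refine ⟨f, ⟨hfc.continuousOn, ?_⟩, ?_⟩
  · -- Bumps of large index are small by (d) applied with a fixed `n₀ ∈ E 1`; for each of the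
    -- finitely many other indices, (c) applies.
    obtain ⟨n₀, hn₀⟩ := nonempty_of_ldens_pos (ha 1 le_rfl)
    rw [Metric.tendsto_atTop']
    intro ε hε
    obtain ⟨Q, hQ⟩ := exists_nat_gt (D ^ n₀ / ε)
    have hfin : ∀ᶠ m : ℕ in atTop, ∀ q ∈ Finset.Icc 1 (Q + 1), m ∈ E q →
        b q * D ^ (q + 2) * ρ m < ε := by
      rw [eventually_all_finset]
      intro q hq
      have h1 := (hc q (Finset.mem_Icc.1 hq).1).const_mul (b q * D ^ (q + 2))
      rw [mul_zero] at h1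
      exact eventually_inf_principal.1 (h1.eventually_lt_const hε)
    obtain ⟨N, hN⟩ := eventually_atTop.1 hfin
    refine ⟨max (n₀ : ℝ) (N + Q + 2), fun x hx => ?_⟩
    have hx1 : (n₀ : ℝ) < x := (le_max_left _ _).trans_lt hx
    have hx2 : (N : ℝ) + Q + 2 < x := (le_max_right _ _).trans_lt hx
    have hx0 : 0 ≤ x := n₀.cast_nonneg.trans hx1.le
    have hρx := hpos x hx0
    rw [dist_zero_right, Real.norm_eq_abs, abs_mul, abs_of_pos hρx]
    by_cases hfx : f x = 0
    · rwa [hfx, abs_zero, zero_mul]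
    obtain ⟨q, hq, m, hm, hne, hfb⟩ := hfne x hfx
    obtain ⟨h1, h2⟩ := bump_ne_zero_bounds hne
    rw [hfb]
    have hs := hsize q x m hx0 m.cast_nonneg hne
    by_cases hqQ : q ≤ Q + 1
    · refine hs.trans_lt (hN m ?_ q (Finset.mem_Icc.2 ⟨hq, hqQ⟩) hm)
      have h3 : (q : ℝ) ≤ Q + 1 := by exact_mod_cast hqQ
      have h4 : (N : ℝ) ≤ m := by linarith
      exact_mod_cast h4
    · have hmn : n₀ < m := by
        by_contra! hle
        rcases hle.eq_or_lt with heq | hlt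
        · have := hdisj q 1 hq le_rfl m hm (heq ▸ hn₀)
          omega
        · have h3 : (m : ℝ) + q + 2 < n₀ := by exact_mod_cast hgap q 1 hq le_rfl m hm n₀ hn₀ hlt
          linarith
      have hmn' : (n₀ : ℝ) ≤ m := by exact_mod_cast hmn.le
      have h3 := hd 1 q le_rfl hq n₀ hn₀ m hm hmn
      have h4 : ρ ((m : ℝ) - n₀) ≤ 1 / M q := h3.trans
        (one_div_le_one_div_of_le (hM0 q) (le_mul_of_one_le_left (hM0 q).le (hM11 1)))
      have h5 := hD n₀ m ((m : ℝ) - n₀) m.cast_nonneg (by linarith) (by simp)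
      have h6 : (Q : ℝ) ≤ q + 1 := by exact_mod_cast (by omega : Q ≤ q + 1)
      have hbq := hb0 q
      rw [div_lt_iff₀ hε] at hQ
      calc _ ≤ b q * D ^ (q + 2) * ρ m := hs
        _ ≤ b q * D ^ (q + 2) * (D ^ n₀ * (1 / M q)) := by
            gcongr
            exact h5.trans (by gcongr)
        _ = D ^ n₀ * (b q * D ^ (q + 2) / M q) := by ring
        _ ≤ D ^ n₀ * (1 / (q + 1)) := mul_le_mul_of_nonneg_left (hbM q) (by positivity)
        _ < ε := by
            rw [mul_one_div, div_lt_iff₀ (by positivity)]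
            nlinarith
  · intro g hg ε hε
    -- At a time `n ∈ E p`, the orbit of `f` is within `1 / (p + 1)` of the `p`-th bump.
    have hclose : ∀ p, 1 ≤ p → ∀ n ∈ E p, ∀ x : ℝ, 0 ≤ x →
        |f (x + n) - bump p x| * ρ x ≤ 1 / (p + 1) := by
      intro p hp n hn x hx
      have hρx := hpos x hx
      by_cases hb0' : bump p x = 0
      swap
      · have := hfE p hp n hn (x + n) (by rwa [add_sub_cancel_right])
        rw [this, add_sub_cancel_right, sub_self, abs_zero, zero_mul]
        positivity
      rw [hb0', sub_zero]
      by_cases hfx : f (x + n) = 0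
      · rw [hfx, abs_zero, zero_mul]
        positivity
      obtain ⟨q, hq, m, hm, hne, hfb⟩ := hfne _ hfx
      obtain ⟨h1, h2⟩ := bump_ne_zero_bounds hne
      have hnm : n < m := by
        by_contra! hle
        rcases hle.eq_or_lt with heq | hlt
        · subst heq
          have := hdisj q p hq hp m hm hn
          subst this
          rw [add_sub_cancel_right] at hne
          exact hne hb0'
        · have h3 : (m : ℝ) + q + 2 < n := by exact_mod_cast hgap q p hq hp m hm n hn hlt
          linarith
      have hnm' : (n : ℝ) ≤ m := by exact_mod_cast hnm.le
      rw [show x + (n : ℝ) - m = x - (m - n) by ring] at hne hfb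
      have hs := hsize q x ((m : ℝ) - n) hx (by linarith) hne
      have h3 := hd p q hp hq n hn m hm hnm
      have h5 : b q * D ^ (q + 2) / M q ≤ 1 :=
        (hbM q).trans ((div_le_one (by positivity)).2 (by linarith [q.cast_nonneg (α := ℝ)]))
      have hbq := hb0 q
      have hMp0 := hM0 p
      rw [hfb]
      calc _ ≤ b q * D ^ (q + 2) * ρ ((m : ℝ) - n) := hs
        _ ≤ b q * D ^ (q + 2) * (1 / (M p * M q)) := by gcongr
        _ = b q * D ^ (q + 2) / M q * (1 / M p) := by
            have := (hM0 q).ne'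
            field_simp
        _ ≤ 1 * (1 / M p) := by gcongr
        _ ≤ 1 / (p + 1) := by
            rw [one_mul]
            exact one_div_le_one_div_of_le (by positivity) (hMp p)
    have hbdd : ∀ L : ℕ, ∃ R : ℝ, 0 < R ∧ ∀ x : ℝ, 0 ≤ x → x ≤ L → ρ x ≤ R := fun L =>
      ⟨D ^ L * ρ 0, by positivity, fun x hx hxL =>
        hD L x 0 hx le_rfl (by rwa [sub_zero, abs_of_nonneg hx])⟩
    obtain ⟨K, hK⟩ := exists_nat_ge (3 * D / ε)
    obtain ⟨p, hpK, hpg⟩ := exists_bump_near hpos hbdd hg (show 0 < ε / 3 by positivity) (K + 1)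
    have hp1 : 1 ≤ p := by omega
    have hpε : D * (1 / (p + 1)) ≤ ε / 3 := by
      have h1 : (K : ℝ) ≤ p := by exact_mod_cast (by omega : K ≤ p)
      rw [div_le_iff₀ hε] at hK
      rw [mul_one_div, div_le_iff₀ (by positivity)]
      nlinarith
    obtain ⟨R, hR0, hR⟩ := hbdd (p + 1)
    push_cast at hR
    have hunif := (bump_hasCompactSupport p).uniformContinuous_of_continuous (bump_continuous p)
    obtain ⟨δ', hδ'0, hδ'⟩ := Metric.uniformContinuous_iff.1 hunif (ε / (3 * R)) (by positivity)
    have hδ0 : 0 < min (δ' / 2) 1 := lt_min (by linarith) one_pos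
    refine ldensR_pos_of_Icc_subset (ha p hp1) hδ0 (min_le_right _ _) ?_
    rintro n hn t ⟨ht1, ht2⟩
    have hn0 : (0 : ℝ) ≤ n := n.cast_nonneg
    refine ⟨hn0.trans ht1, fun x hx => ?_⟩
    obtain ⟨s, rfl⟩ : ∃ s, t = n + s := ⟨t - n, by ring⟩
    have hs0 : 0 ≤ s := by linarith
    have hs1 : s ≤ 1 := by linarith [min_le_right (δ' / 2) 1]
    have hs2 : s < δ' := by linarith [min_le_left (δ' / 2) 1]
    have hρx := hpos x hx
    have e1 : |f (x + (n + s)) - bump p (x + s)| * ρ x ≤ ε / 3 := by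
      have h1 := hclose p hp1 n hn (x + s) (by linarith)
      rw [show x + s + (n : ℝ) = x + (n + s) by ring] at h1
      have h2 := hD 1 x (x + s) hx (by linarith) (by
        rw [abs_le]; constructor <;> push_cast <;> linarith)
      rw [pow_one] at h2
      calc |f (x + (n + s)) - bump p (x + s)| * ρ x
          ≤ |f (x + (n + s)) - bump p (x + s)| * (D * ρ (x + s)) := by gcongr
        _ = D * (|f (x + (n + s)) - bump p (x + s)| * ρ (x + s)) := by ring
        _ ≤ D * (1 / (p + 1)) := by gcongr
        _ ≤ ε / 3 := hpε
    have e2 : |bump p (x + s) - bump p x| * ρ x ≤ ε / 3 := by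
      rcases le_total x (p + 1) with hxp | hxp
      · have h1 := hδ' (a := x + s) (b := x) (by
          rw [Real.dist_eq, add_sub_cancel_left, abs_of_nonneg hs0]; exact hs2)
        rw [Real.dist_eq] at h1
        calc |bump p (x + s) - bump p x| * ρ x ≤ ε / (3 * R) * R := by
              gcongr
              exact hR x hx hxp
          _ = ε / 3 := by field_simp
      · rw [bump_eq_zero_of_ge hxp, bump_eq_zero_of_ge (by linarith), sub_zero, abs_zero, zero_mul]
        positivity
    have e3 := hpg x hx
    calc |f (x + (n + s)) - g x| * ρ x
        = |(f (x + (n + s)) - bump p (x + s)) + (bump p (x + s) - bump p x)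
            + (bump p x - g x)| * ρ x := by congr 2; ring
      _ ≤ (|f (x + (n + s)) - bump p (x + s)| + |bump p (x + s) - bump p x|
            + |bump p x - g x|) * ρ x := by
          gcongr
          exact abs_add_three _ _ _
      _ ≤ ε := by linarith

/-- For `ρ` admissible on `[0,∞)` with `sup_{k∈ℕ} ρ(k+1)/ρ(k) < ∞`, the
translation semigroup is frequently hypercyclic on `C₀^ρ([0,∞))` iff there exist a sequence
`(M(p))` of positive reals tending to `∞` and sets `E_p ⊆ ℕ` satisfying (a)–(d); moreover
this holds for some such `(M(p))` iff for every such `(M(p))` a suitable `(E_p)` exists. -/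
theorem translation_freqHypercyclic_iff_C0HalfLine
    (ρ : ℝ → ℝ) (hρ : AdmissibleH ρ)
    (hsup : ∃ C : ℝ, ∀ k : ℕ, ρ ((k : ℝ) + 1) / ρ (k : ℝ) ≤ C) :
    (FHTransC0H ρ ↔ ∃ M : ℕ → ℝ, GoodM M ∧ ∃ E : ℕ → Set ℕ, Cond6 ρ M E) ∧
    ((∃ M : ℕ → ℝ, GoodM M ∧ ∃ E : ℕ → Set ℕ, Cond6 ρ M E) ↔
      ∀ M : ℕ → ℝ, GoodM M → ∃ E : ℕ → Set ℕ, Cond6 ρ M E) := by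
  refine ⟨⟨exists_cond6_of_FH hρ, FH_of_cond6 hρ hsup⟩, ?_, ?_⟩
  · rintro ⟨M, hM, E, hE⟩ M' hM'
    exact cond6_of_cond6 hM hE hM'
  · intro h
    have hgood : GoodM fun p => (p : ℝ) + 1 := ⟨fun p => by positivity,
      tendsto_atTop_add_const_right _ _ tendsto_natCast_atTop_atTop⟩
    exact ⟨_, hgood, h _ hgood⟩
end

section
/- Let 1 ≤ p < ∞ and let v = (v_k)_{k∈ℤ} be a sequence of strictly positive weights such that the sequence (v_k / v_{k+1})_{k∈ℤ} is bounded. Then the backward shift operator B, (Bx)_k = x_{k+1}, is frequently hypercyclic on ℓ_p^v if and only if Σ_{k∈ℤ} v_k < ∞. -/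
/-!
The proof follows the difference-set method of Bayart and Ruzsa.

If `x` is a frequently hypercyclic vector, the times `n` at which `Bⁿx` is close to the unit vector
at `0` form a set `E` of positive lower density, and `|x m| ≥ 1/2` for every `m ∈ E`. Hence
`∑_{m ∈ E} v (m - n)` is bounded uniformly in `n ∈ E`. Let `M` be the mean obtained as the limit of
Cesàro means along a non-principal ultrafilter (`exists_mean`), and let `γ d` be the mean of
`E ∩ (E - d)`. Averaging over `n` gives `∑ v d * γ d < ∞`. Khintchine recurrence (`syndetic`) gives
constants `c > 0` and `J` such that every `d` has some `0 ≤ j ≤ J` with `γ (d + j) ≥ c`. As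
`v d ≤ K ^ j * v (d + j)` when `K ≥ 1` bounds the quotients `v k / v (k + 1)`, the series `∑ v d`
converges (`summable_of_freqHypercyclic`).

Conversely, if `∑ v k < ∞`, there are sets `A l` of positive lower density whose points keep any
prescribed distances from each other (`exists_separated`). Placing a copy of the `l`-th element of
a dense sequence of finitely supported vectors around each `n ∈ A l` defines a vector in `ℓ_p^v`;
shifted by `n ∈ A l`, it differs from that element only where the tails of `∑ v k` are negligible
(`freqHypercyclic_of_summable`).
-/

open Filter

/-- Membership in `ℓ_p^v`: `Σ_{k∈ℤ} |x_k|^p v_k < ∞`. -/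
def Memlpv (p : ℝ) (v : ℤ → ℝ) (x : ℤ → ℝ) : Prop :=
  Summable fun k : ℤ => |x k| ^ p * v k

/-- Frequent hypercyclicity of the backward shift `(Bx)_k = x_{k+1}` on `ℓ_p^v`:
there is `x ∈ ℓ_p^v` such that for every `y ∈ ℓ_p^v` and `ε > 0`, the set of `n` with
`‖Bⁿx - y‖ ≤ ε` has positive lower density. -/
def FHBackwardShift (p : ℝ) (v : ℤ → ℝ) : Prop :=
  ∃ x : ℤ → ℝ, Memlpv p v x ∧ ∀ y : ℤ → ℝ, Memlpv p v y → ∀ ε : ℝ, 0 < ε →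
    0 < ldens {n : ℕ | ∑' k : ℤ, |x (k + (n : ℤ)) - y k| ^ p * v k ≤ ε ^ p}

/-! ### Shift-invariant means and recurrence -/

/-- The Cesàro means of `f : ℤ → ℝ` along `0, …, N`, normalised by `N` as in `ldens`. -/
noncomputable def avg (f : ℤ → ℝ) (N : ℕ) : ℝ :=
  (∑ n ∈ Finset.range (N + 1), f (n : ℤ)) / (N : ℝ)

/-- `f` is bounded by some constant. -/
def IsBdd (f : ℤ → ℝ) : Prop := ∃ B : ℝ, ∀ n, |f n| ≤ B

lemma avg_abs_le {f : ℤ → ℝ} {B : ℝ} (hB : ∀ n, |f n| ≤ B) (N : ℕ) : |avg f N| ≤ 2 * B := by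
  have hB0 : 0 ≤ B := (abs_nonneg _).trans (hB 0)
  unfold avg
  rcases Nat.eq_zero_or_pos N with h | h
  · subst h
    simpa using hB0
  · have hN : (1 : ℝ) ≤ N := by exact_mod_cast h
    rw [abs_div, Nat.abs_cast, div_le_iff₀ (by linarith)]
    calc |∑ n ∈ Finset.range (N + 1), f (n : ℤ)| ≤ ∑ n ∈ Finset.range (N + 1), |f (n : ℤ)| :=
          Finset.abs_sum_le_sum_abs _ _
      _ ≤ ∑ _n ∈ Finset.range (N + 1), B := Finset.sum_le_sum fun n _ => hB _
      _ = (N + 1) * B := by simp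
      _ ≤ 2 * B * N := by nlinarith

/-- A mean on bounded functions on `ℤ`: the limits of the Cesàro means along a fixed
non-principal ultrafilter. -/
lemma exists_mean : ∃ M : (ℤ → ℝ) → ℝ, ∀ f, IsBdd f →
    Tendsto (avg f) (hyperfilter ℕ : Filter ℕ) (nhds (M f)) := by
  have h : ∀ f : ℤ → ℝ, ∃ m : ℝ, IsBdd f →
      Tendsto (avg f) (hyperfilter ℕ : Filter ℕ) (nhds m) := by
    intro f
    by_cases hf : IsBdd f
    · obtain ⟨B, hB⟩ := hf
      have hc : IsCompact (Set.Icc (-(2 * B)) (2 * B)) := isCompact_Icc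
      obtain ⟨m, -, hm⟩ := hc.ultrafilter_le_nhds ((hyperfilter ℕ).map (avg f)) (by
        rw [le_principal_iff]
        rw [Ultrafilter.coe_map, Filter.mem_map]
        exact Filter.univ_mem' fun N => abs_le.1 (avg_abs_le hB N))
      exact ⟨m, fun _ => hm⟩
    · exact ⟨0, fun h => absurd h hf⟩
  choose M hM using h
  exact ⟨M, hM⟩

lemma hyper_le_atTop : (hyperfilter ℕ : Filter ℕ) ≤ atTop := by
  rw [← Nat.cofinite_eq_atTop]; exact hyperfilter_le_cofinite

section Mean

variable {M : (ℤ → ℝ) → ℝ}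

lemma mean_mono
    (hM : ∀ f, IsBdd f → Tendsto (avg f) (hyperfilter ℕ : Filter ℕ) (nhds (M f)))
    {f g : ℤ → ℝ} (hf : IsBdd f) (hg : IsBdd g) (h : ∀ n, f n ≤ g n) : M f ≤ M g := by
  refine le_of_tendsto_of_tendsto' (hM f hf) (hM g hg) fun N => ?_
  unfold avg
  gcongr
  exact h _

lemma mean_le_two_mul
    (hM : ∀ f, IsBdd f → Tendsto (avg f) (hyperfilter ℕ : Filter ℕ) (nhds (M f)))
    {f : ℤ → ℝ} {C : ℝ} (h : ∀ n, 0 ≤ f n) (hC : ∀ n, f n ≤ C) : M f ≤ 2 * C := by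
  have hb : ∀ n, |f n| ≤ C := fun n => by rw [abs_of_nonneg (h n)]; exact hC n
  exact le_of_tendsto' (hM f ⟨C, hb⟩) fun N => (le_abs_self _).trans (avg_abs_le hb N)

lemma isBdd_sum {ι : Type*} (s : Finset ι) (a : ι → ℝ) (f : ι → ℤ → ℝ)
    (hf : ∀ i, IsBdd (f i)) : IsBdd fun n => ∑ i ∈ s, a i * f i n := by
  choose B hB using hf
  refine ⟨∑ i ∈ s, |a i| * B i, fun n => (Finset.abs_sum_le_sum_abs _ _).trans ?_⟩
  refine Finset.sum_le_sum fun i _ => ?_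
  rw [abs_mul]
  exact mul_le_mul_of_nonneg_left (hB i n) (abs_nonneg _)

lemma mean_sum
    (hM : ∀ f, IsBdd f → Tendsto (avg f) (hyperfilter ℕ : Filter ℕ) (nhds (M f)))
    {ι : Type*} (s : Finset ι) (a : ι → ℝ) (f : ι → ℤ → ℝ)
    (hf : ∀ i, IsBdd (f i)) :
    M (fun n => ∑ i ∈ s, a i * f i n) = ∑ i ∈ s, a i * M (f i) := by
  refine tendsto_nhds_unique (hM _ (isBdd_sum s a f hf)) ?_
  have h := tendsto_finsetSum s fun i _ => (hM (f i) (hf i)).const_mul (a i)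
  refine h.congr fun N => ?_
  unfold avg
  rw [Finset.sum_comm, Finset.sum_div]
  refine Finset.sum_congr rfl fun i _ => ?_
  rw [← Finset.mul_sum, mul_div_assoc]

lemma mean_shift_one
    (hM : ∀ f, IsBdd f → Tendsto (avg f) (hyperfilter ℕ : Filter ℕ) (nhds (M f)))
    {f : ℤ → ℝ} (hf : IsBdd f) : M (fun n => f (n + 1)) = M f := by
  have hf' : IsBdd fun n => f (n + 1) := ⟨hf.choose, fun n => hf.choose_spec _⟩
  obtain ⟨B, hB⟩ := hf
  refine tendsto_nhds_unique (hM _ hf') ?_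
  have h0 : Tendsto (fun N : ℕ => (f ((N : ℤ) + 1) - f 0) / (N : ℝ)) atTop (nhds 0) := by
    refine squeeze_zero_norm (a := fun N : ℕ => 2 * B / (N : ℝ)) (fun N => ?_)
      (tendsto_const_div_atTop_nhds_zero_nat _)
    rw [Real.norm_eq_abs, abs_div, Nat.abs_cast]
    gcongr
    have h1 := abs_le.1 (hB ((N : ℤ) + 1))
    have h2 := abs_le.1 (hB 0)
    rw [abs_le]
    constructor <;> linarith
  have h := (hM f ⟨B, hB⟩).add (h0.mono_left hyper_le_atTop)
  rw [add_zero] at h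
  refine h.congr fun N => ?_
  unfold avg
  rw [← add_div]
  congr 1
  have h1 := Finset.sum_range_succ (fun n : ℕ => f (n : ℤ)) (N + 1)
  rw [Finset.sum_range_succ'] at h1
  push_cast at h1
  linarith

lemma mean_shift
    (hM : ∀ f, IsBdd f → Tendsto (avg f) (hyperfilter ℕ : Filter ℕ) (nhds (M f)))
    {f : ℤ → ℝ} (hf : IsBdd f) (t : ℤ) : M (fun n => f (n + t)) = M f := by
  have hb : ∀ t : ℤ, IsBdd fun n => f (n + t) :=
    fun t => ⟨hf.choose, fun n => hf.choose_spec _⟩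
  induction t using Int.induction_on with
  | zero => simp
  | succ i ih =>
    rw [← ih, ← mean_shift_one hM (hb i)]
    congr 1; ext n; congr 1; ring
  | pred i ih =>
    rw [← ih, ← mean_shift_one hM (hb (-(i : ℤ) - 1))]
    congr 1; ext n; congr 1; ring

end Mean

/-- Khintchine recurrence: if `φ` is the indicator of a set of positive mean, then the `d` for which
the set and its translate by `d` overlap in mean at least `(M φ) ^ 2 / 4` have bounded gaps.
Otherwise there would be arbitrarily many translates with pairwise smaller overlap, against the
Cauchy–Schwarz inequality. -/
lemma syndetic {M : (ℤ → ℝ) → ℝ}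
    (hM : ∀ f, IsBdd f → Tendsto (avg f) (hyperfilter ℕ : Filter ℕ) (nhds (M f)))
    {φ : ℤ → ℝ} (hφ : ∀ n, φ n = 0 ∨ φ n = 1) (hδ : 0 < M φ) :
    ∃ J : ℕ, ∀ d : ℤ, ∃ j : ℕ, j ≤ J ∧
      (M φ) ^ 2 / 4 ≤ M (fun n => φ n * φ (n + (d + j))) := by
  set δ := M φ with hδdef
  have h0 : ∀ n, 0 ≤ φ n := fun n => by rcases hφ n with h | h <;> simp [h]
  have h1 : ∀ n, φ n ≤ 1 := fun n => by rcases hφ n with h | h <;> simp [h]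
  have hφb : IsBdd φ := ⟨1, fun n => by rw [abs_of_nonneg (h0 n)]; exact h1 n⟩
  have hprodb : ∀ a b : ℤ, IsBdd fun n => φ (n + a) * φ (n + b) := fun a b =>
    ⟨1, fun n => by
      rw [abs_of_nonneg (mul_nonneg (h0 _) (h0 _))]
      exact mul_le_one₀ (h1 _) (h0 _) (h1 _)⟩
  set γ : ℤ → ℝ := fun d => M (fun n => φ n * φ (n + d)) with hγ
  have hγpair : ∀ a b : ℤ, M (fun n => φ (n + a) * φ (n + b)) = γ (b - a) := by
    intro a b
    have h := mean_shift hM (hprodb 0 (b - a)) a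
    simp only [hγ]
    simp only [add_zero] at h
    rw [← h]
    congr 1; ext n; congr 2; ring
  have hγ0 : γ 0 = δ := by
    simp only [hγ, hδdef]
    congr 1; ext n; rcases hφ n with h | h <;> simp [h]
  have hγneg : ∀ d, γ (-d) = γ d := by
    intro d
    have h2 := hγpair d 0
    have h3 := hγpair 0 d
    rw [zero_sub] at h2
    rw [sub_zero] at h3
    rw [← h2, ← h3]
    congr 1; ext n; ring
  have hδ2 : δ ≤ 2 := by simpa using mean_le_two_mul hM h0 h1
  by_contra! hcon
  -- Arbitrarily many translates of the set then have pairwise small overlap.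
  have key : ∀ r : ℕ, ∃ D : Finset ℤ, D.card = r ∧
      ∀ a ∈ D, ∀ b ∈ D, a ≠ b → γ (b - a) < δ ^ 2 / 4 := by
    intro r
    induction r with
    | zero => exact ⟨∅, by simp⟩
    | succ r ih =>
      obtain ⟨D, hcard, hD⟩ := ih
      set A : ℕ := ∑ a ∈ D, a.natAbs with hA
      have hAle : ∀ a ∈ D, a.natAbs ≤ A := fun a ha =>
        Finset.single_le_sum (f := fun a : ℤ => a.natAbs) (fun _ _ => Nat.zero_le _) ha
      -- With `D ⊆ [-A, A]`, all the differences `d + A - a`, `a ∈ D`, lie in `[d, d + 2A]`.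
      obtain ⟨d, hd⟩ := hcon (2 * A)
      have hnew : ∀ a ∈ D, γ (d + A - a) < δ ^ 2 / 4 := by
        intro a ha
        have h2 := hAle a ha
        have h3 := hd (A - a).toNat (by omega)
        have h4 : (((A : ℤ) - a).toNat : ℤ) = A - a := Int.toNat_of_nonneg (by omega)
        rw [h4] at h3
        simp only [hγ]
        rwa [← add_sub_assoc] at h3
      -- Membership would give the overlap `γ 0 = δ`, which is at least `δ ^ 2 / 4` as `δ ≤ 2`.
      have hnot : d + A ∉ D := by
        intro hmem
        have h2 := hnew _ hmem
        rw [sub_self, hγ0] at h2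
        nlinarith
      refine ⟨insert (d + A) D, by rw [Finset.card_insert_of_notMem hnot, hcard], ?_⟩
      intro a ha b hb hab
      rcases Finset.mem_insert.1 ha with ha | ha <;> rcases Finset.mem_insert.1 hb with hb | hb
      · exact absurd (ha.trans hb.symm) hab
      · rw [ha, ← hγneg, neg_sub]; exact hnew b hb
      · rw [hb]; exact hnew a ha
      · exact hD a ha b hb hab
  obtain ⟨r, hr⟩ := exists_nat_gt (4 / δ)
  obtain ⟨D, hcard, hD⟩ := key r
  -- Compare the first and second moments of `g = ∑ φ (· + a)`: `2tg ≤ t² + g²` at `t = rδ/2`.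
  have hg : ∀ n, (r * δ) * ∑ a ∈ D, φ (n + a) ≤
      (r * δ / 2) ^ 2 + ∑ q ∈ D ×ˢ D, φ (n + q.1) * φ (n + q.2) := by
    intro n
    rw [Finset.sum_product]
    simp only
    rw [← Finset.sum_mul_sum]
    nlinarith [sq_nonneg (r * δ / 2 - ∑ a ∈ D, φ (n + a))]
  have hLHS := mean_sum hM D (fun _ => r * δ) (fun a n => φ (n + a))
    (fun a => ⟨hφb.choose, fun n => hφb.choose_spec _⟩)
  have hRHS := mean_sum hM (D ×ˢ D) (fun _ => (1 : ℝ)) (fun q n => φ (n + q.1) * φ (n + q.2))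
    (fun q => hprodb _ _)
  have hbL := isBdd_sum D (fun _ => r * δ) (fun a n => φ (n + a))
    (fun a => ⟨hφb.choose, fun n => hφb.choose_spec _⟩)
  have hbR := isBdd_sum (D ×ˢ D) (fun _ => (1 : ℝ)) (fun q n => φ (n + q.1) * φ (n + q.2))
    (fun q => hprodb _ _)
  have hle : M (fun n => ∑ a ∈ D, (r * δ) * φ (n + a)) ≤ 2 * (r * δ / 2) ^ 2 +
      M (fun n => ∑ q ∈ D ×ˢ D, 1 * (φ (n + q.1) * φ (n + q.2))) := by
    have hc : Tendsto (fun N => 2 * (r * δ / 2) ^ 2 +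
        avg (fun n => ∑ q ∈ D ×ˢ D, 1 * (φ (n + q.1) * φ (n + q.2))) N)
        (hyperfilter ℕ : Filter ℕ) (nhds _) := (hM _ hbR).const_add _
    refine le_of_tendsto_of_tendsto' (hM _ hbL) hc fun N => ?_
    have hconst : avg (fun _ => (r * δ / 2) ^ 2) N ≤ 2 * (r * δ / 2) ^ 2 :=
      (le_abs_self _).trans (avg_abs_le (fun n => (abs_of_nonneg (sq_nonneg _)).le) N)
    refine le_trans ?_ (add_le_add_left hconst _)
    unfold avg
    rw [← add_div, ← Finset.sum_add_distrib]
    gcongr with n hn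
    have := hg n
    rw [Finset.mul_sum] at this
    simpa using this
  rw [hLHS, hRHS] at hle
  have hsumL : ∑ a ∈ D, (r * δ) * M (fun n => φ (n + a)) = r * (r * δ * δ) := by
    rw [Finset.sum_congr rfl fun a _ => by rw [mean_shift hM hφb a]]
    simp [hcard, hδdef]
  have hsumR : ∑ q ∈ D ×ˢ D, 1 * M (fun n => φ (n + q.1) * φ (n + q.2)) ≤
      r * (δ + r * (δ ^ 2 / 4)) := by
    rw [Finset.sum_product]
    calc _ ≤ ∑ a ∈ D, (δ + r * (δ ^ 2 / 4)) := Finset.sum_le_sum fun a ha => by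
          calc _ ≤ ∑ b ∈ D, ((if b = a then δ else 0) + δ ^ 2 / 4) :=
                Finset.sum_le_sum fun b hb => by
                  rw [one_mul, hγpair]
                  split_ifs with h
                  · rw [h, sub_self, hγ0]; nlinarith
                  · have := hD a ha b hb (Ne.symm h); linarith
            _ = _ := by
                rw [Finset.sum_add_distrib, Finset.sum_ite_eq' D a, if_pos ha]
                simp [hcard]
      _ = _ := by simp only [Finset.sum_const, hcard, nsmul_eq_mul]
  rw [hsumL] at hle
  have hr' : 4 < r * δ := by rwa [div_lt_iff₀ hδ] at hr
  have hrpos : (0 : ℝ) < r := by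
    by_contra hneg
    nlinarith
  have : r * (r * δ * δ) ≤ 2 * (r * δ / 2) ^ 2 + r * (δ + r * (δ ^ 2 / 4)) := by linarith
  nlinarith [mul_pos hrpos hδ, mul_pos (mul_pos hrpos hδ) (sub_pos.2 hr')]

/-! ### Lower density -/

lemma ldens_quot_nonneg (A : Set ℕ) (N : ℕ) : 0 ≤ ((A ∩ Set.Iic N).ncard : ℝ) / (N : ℝ) := by
  positivity

lemma ldens_quot_le (A : Set ℕ) (N : ℕ) : ((A ∩ Set.Iic N).ncard : ℝ) / (N : ℝ) ≤ 2 := by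
  have h : (A ∩ Set.Iic N).ncard ≤ N + 1 := by
    refine (Set.ncard_le_ncard Set.inter_subset_right (Set.finite_Iic N)).trans ?_
    rw [← Finset.coe_Iic, Set.ncard_coe_finset, Nat.card_Iic]
  rcases Nat.eq_zero_or_pos N with h0 | h0
  · subst h0; simp
  · have hN : (1 : ℝ) ≤ N := by exact_mod_cast h0
    have h' : ((A ∩ Set.Iic N).ncard : ℝ) ≤ N + 1 := by exact_mod_cast h
    rw [div_le_iff₀ (by linarith)]
    linarith

lemma eventually_of_ldens_pos {A : Set ℕ} (h : 0 < ldens A) :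
    ∃ c : ℝ, 0 < c ∧ ∀ᶠ N : ℕ in atTop, c ≤ ((A ∩ Set.Iic N).ncard : ℝ) / (N : ℝ) := by
  refine ⟨ldens A / 2, half_pos h, ?_⟩
  have h2 : ldens A / 2 < ldens A := half_lt_self h
  have := eventually_lt_of_lt_liminf (f := atTop) h2
    (isBoundedUnder_of ⟨0, fun N => ldens_quot_nonneg A N⟩)
  exact this.mono fun N hN => hN.le

lemma ldens_pos_of_eventually {A : Set ℕ} {c : ℝ} (hc : 0 < c)
    (h : ∀ᶠ N : ℕ in atTop, c ≤ ((A ∩ Set.Iic N).ncard : ℝ) / (N : ℝ)) : 0 < ldens A := by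
  refine hc.trans_le (le_liminf_of_le ?_ h)
  exact (isBoundedUnder_of ⟨2, fun N => ldens_quot_le A N⟩).isCoboundedUnder_ge

lemma ldens_pos_mono {A B : Set ℕ} (hAB : A ⊆ B) (h : 0 < ldens A) : 0 < ldens B := by
  obtain ⟨c, hc, hA⟩ := eventually_of_ldens_pos h
  refine ldens_pos_of_eventually hc (hA.mono fun N hN => hN.trans ?_)
  have : (A ∩ Set.Iic N).ncard ≤ (B ∩ Set.Iic N).ncard :=
    Set.ncard_le_ncard (Set.inter_subset_inter_left _ hAB)
      ((Set.finite_Iic N).subset Set.inter_subset_right)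
  gcongr

/-! ### Necessity of summability -/

/-- `B` maps `ℓ_p^v` into itself. -/
lemma Memlpv.shift {p : ℝ} {v : ℤ → ℝ} (hv : ∀ k, 0 < v k) {C : ℝ}
    (hC : ∀ k : ℤ, v k ≤ C * v (k + 1)) {x : ℤ → ℝ} (hx : Memlpv p v x) (n : ℕ) :
    Memlpv p v fun k => x (k + (n : ℤ)) := by
  induction n with
  | zero => simpa using hx
  | succ n ih =>
    have h1 : Summable fun k : ℤ => |x (k + 1 + n)| ^ p * v (k + 1) :=
      (Equiv.addRight (1 : ℤ)).summable_iff.2 ih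
    refine Summable.of_nonneg_of_le (fun k => mul_nonneg (by positivity) (hv k).le) (fun k => ?_)
      (h1.mul_left C)
    have h2 : k + ((n + 1 : ℕ) : ℤ) = k + 1 + n := by push_cast; ring
    simp only [h2]
    rw [mul_left_comm]
    exact mul_le_mul_of_nonneg_left (hC k) (by positivity)

/-- The return times to a small ball around the unit vector at `0` form a set `E` of positive lower
density, and `∑ v e` over the differences `e = m - n`, `m ∈ E`, is bounded uniformly in `n ∈ E`.
Averaging over `n`, and using `syndetic` with `v d ≤ K ^ j * v (d + j)`, bounds `∑ v d`. -/
lemma summable_of_freqHypercyclic (p : ℝ) (hp : 1 ≤ p) (v : ℤ → ℝ) (hv : ∀ k, 0 < v k)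
    (hbdd : ∃ C : ℝ, ∀ k : ℤ, v k / v (k + 1) ≤ C) (hFH : FHBackwardShift p v) :
    Summable v := by
  classical
  have hp0 : 0 < p := by linarith
  obtain ⟨C₀, hC₀⟩ := hbdd
  obtain ⟨K, hK1, hK⟩ : ∃ K : ℝ, 1 ≤ K ∧ ∀ k : ℤ, v k ≤ K * v (k + 1) :=
    ⟨max 1 C₀, le_max_left _ _, fun k =>
      (div_le_iff₀ (hv _)).1 ((hC₀ k).trans (le_max_right _ _))⟩
  have hKj : ∀ (j : ℕ) (k : ℤ), v k ≤ K ^ j * v (k + j) := by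
    intro j
    induction j with
    | zero => intro k; simp
    | succ j ih =>
      intro k
      have h2 : k + ((j + 1 : ℕ) : ℤ) = k + j + 1 := by push_cast; ring
      rw [h2, pow_succ, mul_assoc]
      exact (ih k).trans (mul_le_mul_of_nonneg_left (hK _) (by positivity))
  obtain ⟨x, hx, hfreq⟩ := hFH
  set y : ℤ → ℝ := Pi.single 0 1 with hy
  have hyne : ∀ k : ℤ, k ≠ 0 → y k = 0 := fun k hk => by simp [hy, hk]
  have hy0 : y 0 = 1 := by simp [hy]
  have hymem : Memlpv p v y := by
    refine summable_of_ne_finset_zero (s := {0}) fun k hk => ?_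
    rw [hyne k (by simpa using hk), abs_zero, Real.zero_rpow hp0.ne', zero_mul]
  set ε : ℝ := v 0 ^ (1 / p) * (1 / 2) with hε
  have hv0 := hv 0
  have hεpos : 0 < ε := by positivity
  have hεp : ε ^ p = v 0 * (1 / 2) ^ p := by
    rw [hε, Real.mul_rpow (by positivity) (by norm_num), ← Real.rpow_mul hv0.le,
      one_div_mul_cancel hp0.ne', Real.rpow_one]
  set E : Set ℕ := {n : ℕ | ∑' k : ℤ, |x (k + (n : ℤ)) - y k| ^ p * v k ≤ ε ^ p} with hE
  have hEpos : 0 < ldens E := hfreq y hymem ε hεpos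
  have hsum : ∀ n : ℕ, Summable fun k : ℤ => |x (k + (n : ℤ)) - y k| ^ p * v k := by
    intro n
    refine (Memlpv.shift hv hK hx n).congr_cofinite ?_
    filter_upwards [(Set.finite_singleton (0 : ℤ)).compl_mem_cofinite] with k hk
    rw [hyne k hk, sub_zero]
  have hterm : ∀ n ∈ E, ∀ F : Finset ℤ,
      ∑ k ∈ F, |x (k + (n : ℤ)) - y k| ^ p * v k ≤ ε ^ p := fun n hn F =>
    ((hsum n).sum_le_tsum F fun k _ => mul_nonneg (by positivity) (hv k).le).trans hn
  -- At the return times to the ball around the unit vector at `0`, the sequence `x` is large.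
  have hlarge : ∀ n ∈ E, 1 / 2 ≤ |x n| := by
    intro n hn
    have h := hterm n hn {0}
    rw [Finset.sum_singleton, hy0, zero_add, hεp, mul_comm] at h
    have h2 := le_of_mul_le_mul_left h hv0
    rw [Real.rpow_le_rpow_iff (abs_nonneg _) (by norm_num) hp0] at h2
    have h3 := (abs_le.1 h2).1
    exact le_trans (by linarith) (le_abs_self _)
  set φ : ℤ → ℝ := fun n => if ∃ m : ℕ, m ∈ E ∧ (m : ℤ) = n then 1 else 0 with hφdef
  have hφ : ∀ n, φ n = 0 ∨ φ n = 1 := by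
    intro n
    simp only [hφdef]
    split_ifs <;> simp
  have hφ0 : ∀ n, 0 ≤ φ n := fun n => by rcases hφ n with h | h <;> simp [h]
  have hφ1 : ∀ n, φ n ≤ 1 := fun n => by rcases hφ n with h | h <;> simp [h]
  obtain ⟨M, hM⟩ := exists_mean
  have hφb : IsBdd φ := ⟨1, fun n => by rw [abs_of_nonneg (hφ0 n)]; exact hφ1 n⟩
  have hδ : 0 < M φ := by
    obtain ⟨c, hc, hcE⟩ := eventually_of_ldens_pos hEpos
    refine hc.trans_le (ge_of_tendsto (hM φ hφb) (hyper_le_atTop ?_))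
    refine hcE.mono fun N hN => hN.trans ?_
    unfold avg
    gcongr
    have h1 : E ∩ Set.Iic N = ((Finset.range (N + 1)).filter (· ∈ E) : Finset ℕ) := by
      ext m
      simp [and_comm]
    rw [h1, Set.ncard_coe_finset, Finset.card_filter]
    push_cast
    refine Finset.sum_le_sum fun m _ => ?_
    simp only [hφdef]
    by_cases hm : m ∈ E
    · rw [if_pos hm, if_pos ⟨m, hm, rfl⟩]
    · rw [if_neg hm]; split_ifs <;> norm_num
  obtain ⟨J, hJ⟩ := syndetic hM hφ hδ
  set c : ℝ := (M φ) ^ 2 / 4 with hc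
  have hcpos : 0 < c := by positivity
  set γ : ℤ → ℝ := fun d => M (fun n => φ n * φ (n + d)) with hγ
  have hprodb : ∀ d : ℤ, IsBdd fun n => φ n * φ (n + d) := fun d =>
    ⟨1, fun n => by
      rw [abs_of_nonneg (mul_nonneg (hφ0 _) (hφ0 _))]
      exact mul_le_one₀ (hφ1 _) (hφ0 _) (hφ1 _)⟩
  have hγ0 : ∀ d, 0 ≤ γ d := by
    intro d
    refine ge_of_tendsto' (hM _ (hprodb d)) fun N => ?_
    unfold avg
    exact div_nonneg (Finset.sum_nonneg fun n _ => mul_nonneg (hφ0 _) (hφ0 _)) (Nat.cast_nonneg _)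
  -- Averaging `∑ v e` over the differences `e` of return times.
  have hγsum : ∀ F : Finset ℤ, ∑ e ∈ F, v e * γ e ≤ 2 * (2 * v 0) := by
    intro F
    rw [← mean_sum hM F v (fun d n => φ n * φ (n + d)) hprodb]
    refine mean_le_two_mul hM
      (fun n => Finset.sum_nonneg fun e _ => mul_nonneg (hv e).le (mul_nonneg (hφ0 _) (hφ0 _)))
      fun n => ?_
    by_cases hn : ∃ m : ℕ, m ∈ E ∧ (m : ℤ) = n
    swap
    · have h0 : φ n = 0 := if_neg hn
      simp only [h0, zero_mul, mul_zero, Finset.sum_const_zero]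
      linarith
    obtain ⟨m, hm, rfl⟩ := hn
    have h2p : (0 : ℝ) < 2 ^ p := by positivity
    have hpp : (2 : ℝ) ^ p * (1 / 2) ^ p = 1 := by
      rw [← Real.mul_rpow (by norm_num) (by norm_num)]; norm_num
    have hle : ∀ e ∈ F, v e * (φ m * φ (m + e)) ≤
        (if e = 0 then v 0 else 0) + 2 ^ p * (|x (e + (m : ℤ)) - y e| ^ p * v e) := by
      intro e _
      have hve := hv e
      by_cases he : e = 0
      · subst he
        rw [if_pos rfl]
        have h3 : v 0 * (φ m * φ (m + 0)) ≤ v 0 * 1 :=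
          mul_le_mul_of_nonneg_left (mul_le_one₀ (hφ1 _) (hφ0 _) (hφ1 _)) hve.le
        have h4 : 0 ≤ 2 ^ p * (|x (0 + (m : ℤ)) - y 0| ^ p * v 0) := by positivity
        linarith
      · rw [if_neg he, hyne e he, sub_zero, zero_add]
        by_cases hme : ∃ q : ℕ, q ∈ E ∧ (q : ℤ) = m + e
        · obtain ⟨q, hq, hqe⟩ := hme
          have h3 := hlarge q hq
          rw [hqe, add_comm] at h3
          have h4 : (1 / 2 : ℝ) ^ p ≤ |x (e + m)| ^ p :=
            Real.rpow_le_rpow (by norm_num) h3 hp0.le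
          have h5 : 1 ≤ 2 ^ p * |x (e + m)| ^ p := by
            rw [← hpp]; exact mul_le_mul_of_nonneg_left h4 h2p.le
          have h6 : φ m * φ (m + e) ≤ 1 := mul_le_one₀ (hφ1 _) (hφ0 _) (hφ1 _)
          nlinarith
        · have h0 : φ (m + e) = 0 := if_neg hme
          rw [h0, mul_zero, mul_zero]
          positivity
    refine (Finset.sum_le_sum hle).trans ?_
    rw [Finset.sum_add_distrib, ← Finset.mul_sum]
    have h7 : ∑ e ∈ F, (if e = 0 then v 0 else 0) ≤ v 0 := by
      rw [Finset.sum_ite_eq' F]; split_ifs <;> linarith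
    have h8 := mul_le_mul_of_nonneg_left (hterm m hm F) h2p.le
    rw [hεp, mul_left_comm, hpp] at h8
    linarith
  -- Every `d` has a `d + j` with `0 ≤ j ≤ J` and `γ (d + j) ≥ c`; compare `v d` with `v (d + j)`.
  refine summable_of_sum_le (c := ∑ _j ∈ Finset.range (J + 1), K ^ J / c * (2 * (2 * v 0)))
    (fun k => (hv k).le) fun F => ?_
  have hstep : ∀ d ∈ F, v d ≤ ∑ j ∈ Finset.range (J + 1), K ^ J / c * (v (d + j) * γ (d + j)) := by
    intro d _
    obtain ⟨j, hjJ, hj⟩ := hJ d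
    have hnn : ∀ i : ℕ, 0 ≤ K ^ J / c * (v (d + i) * γ (d + i)) := fun i =>
      mul_nonneg (by positivity) (mul_nonneg (hv _).le (hγ0 _))
    refine le_trans ?_ (Finset.single_le_sum
      (f := fun j : ℕ => K ^ J / c * (v (d + j) * γ (d + j))) (fun i _ => hnn i)
      (Finset.mem_range.2 (Nat.lt_succ_of_le hjJ)))
    have hvj := hv (d + j)
    calc v d ≤ K ^ j * v (d + j) := hKj j d
      _ ≤ K ^ J * v (d + j) := by gcongr
      _ = K ^ J / c * (v (d + j) * c) := by field_simp
      _ ≤ K ^ J / c * (v (d + j) * γ (d + j)) := by gcongr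
  refine (Finset.sum_le_sum hstep).trans ?_
  rw [Finset.sum_comm]
  refine Finset.sum_le_sum fun j _ => ?_
  rw [← Finset.mul_sum]
  refine mul_le_mul_of_nonneg_left ?_ (by positivity)
  have := hγsum (F.map (Equiv.addRight (j : ℤ)).toEmbedding)
  rwa [Finset.sum_map] at this

/-! ### Separated sets of positive lower density -/

lemma sum_half_pow_le (l : ℕ) (S : Finset ℕ) (hS : ∀ s ∈ S, l ≤ s) :
    ∑ s ∈ S, (1 / 2 : ℝ) ^ s ≤ 2 * (1 / 2) ^ l := by
  have h1 : ∀ n, ∑ i ∈ Finset.range n, (1 / 2 : ℝ) ^ (l + i)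
      = 2 * (1 / 2) ^ l - 2 * (1 / 2) ^ (l + n) := by
    intro n
    induction n with
    | zero => simp
    | succ n ih => rw [Finset.sum_range_succ, ih, ← add_assoc, pow_succ]; ring
  obtain ⟨n, hn⟩ : ∃ n, ∀ s ∈ S, s < n := ⟨S.sup id + 1, fun s hs =>
    Nat.lt_succ_of_le (Finset.le_sup (f := id) hs)⟩
  have h2 : S ⊆ Finset.Ico l (l + n) := fun s hs =>
    Finset.mem_Ico.2 ⟨hS s hs, (hn s hs).trans_le (Nat.le_add_left _ _)⟩
  refine (Finset.sum_le_sum_of_subset_of_nonneg h2 fun _ _ _ => by positivity).trans ?_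
  rw [Finset.sum_Ico_eq_sum_range, Nat.add_sub_cancel_left, h1]
  have : (0 : ℝ) ≤ 2 * (1 / 2) ^ (l + n) := by positivity
  linarith

/-- Sets of positive lower density that are mutually well separated. They are the multiples of
rapidly growing moduli `m l` from which all points close to multiples of some `m j`, `j > l`,
are removed. Since `∑_{j > l} (2 N j + 1) / m j` is small against `1 / m l`, the removed part has
small density. -/
lemma exists_separated (N : ℕ → ℕ) :
    ∃ A : ℕ → Set ℕ, (∀ l, 0 < ldens (A l)) ∧ (∀ l, ∀ n ∈ A l, N l ≤ n) ∧
      ∀ l j : ℕ, ∀ n ∈ A l, ∀ m ∈ A j, (l, n) ≠ (j, m) →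
        (N (max l j) : ℤ) ≤ |(n : ℤ) - m| := by
  classical
  obtain ⟨m, hm0, hms⟩ : ∃ m : ℕ → ℕ, m 0 = 2 * N 0 + 2 ∧
      ∀ l, m (l + 1) = 16 * (2 * N (l + 1) + 1) * m l :=
    ⟨fun l => Nat.rec (2 * N 0 + 2) (fun l q => 16 * (2 * N (l + 1) + 1) * q) l, rfl,
      fun _ => rfl⟩
  have hmpos : ∀ l, 0 < m l := by
    intro l
    induction l with
    | zero => omega
    | succ l ih => rw [hms]; positivity
  have hmN : ∀ l, 2 * N l ≤ m l := by
    intro l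
    cases l with
    | zero => omega
    | succ l => rw [hms]; nlinarith [hmpos l]
  have hm2 : ∀ l, 2 * m l ≤ m (l + 1) := by
    intro l; rw [hms]; nlinarith [hmpos l, Nat.zero_le (N (l + 1) * m l)]
  have hmgrow : ∀ l i, 2 ^ i * m l ≤ m (l + i) := by
    intro l i
    induction i with
    | zero => simp
    | succ i ih => rw [pow_succ, ← add_assoc]; have := hm2 (l + i); nlinarith
  have hmlt : ∀ j, j < m j := by
    intro j
    have h1 := hmgrow 0 j
    rw [zero_add] at h1
    have h2 : j < 2 ^ j := Nat.lt_two_pow_self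
    nlinarith [hmpos 0]
  set A : ℕ → Set ℕ := fun l => {n | 0 < n ∧ m l ∣ n ∧
    ∀ j, l < j → ∀ t : ℕ, 0 < t → (N j : ℤ) ≤ |(n : ℤ) - (t * m j : ℕ)|} with hA
  refine ⟨A, ?_, ?_, ?_⟩
  · intro l
    have hml : (0 : ℝ) < m l := by exact_mod_cast hmpos l
    refine ldens_pos_of_eventually (c := 1 / (2 * m l)) (by positivity) ?_
    filter_upwards [eventually_ge_atTop (4 * m l)] with X hX
    have hXpos : 0 < X := by have := hmpos l; omega
    have hXr : (0 : ℝ) < X := by exact_mod_cast hXpos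
    rw [le_div_iff₀ hXr]
    -- The points up to `X` that are too close to a multiple of `m j`.
    set bad : ℕ → Finset ℕ := fun j => (Finset.Icc 1 (2 * X / m j) ×ˢ
      Finset.range (2 * N j + 1)).image fun q => q.1 * m j + q.2 - N j with hbad
    have hcardbad : ∀ i, ((bad (l + i + 1)).card : ℝ) ≤ X / (8 * m l) * (1 / 2) ^ i := by
      intro i
      have h1 : (bad (l + i + 1)).card ≤
          (2 * X / m (l + i + 1)) * (2 * N (l + i + 1) + 1) := by
        refine Finset.card_image_le.trans ?_
        simp
      have hpos' : (0 : ℝ) < m (l + i) := by exact_mod_cast hmpos _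
      have h2 : ((2 * X / m (l + i + 1) : ℕ) : ℝ) ≤ (2 * X : ℕ) / (m (l + i + 1) : ℝ) :=
        Nat.cast_div_le
      have h3 : ((bad (l + i + 1)).card : ℝ) ≤
          (2 * X : ℕ) / (m (l + i + 1) : ℝ) * (2 * N (l + i + 1) + 1) := by
        refine le_trans (Nat.cast_le.2 h1) ?_
        push_cast
        push_cast at h2
        gcongr
      have h4 : (2 * X : ℕ) / (m (l + i + 1) : ℝ) * (2 * N (l + i + 1) + 1)
          = X / (8 * m (l + i)) := by
        rw [hms]
        push_cast
        field_simp
        ring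
      rw [h4] at h3
      refine h3.trans ?_
      have h5 : (2 : ℝ) ^ i * m l ≤ m (l + i) := by exact_mod_cast hmgrow l i
      rw [one_div, inv_pow, div_mul_eq_mul_div, ← div_eq_mul_inv, div_div]
      exact div_le_div_of_nonneg_left hXr.le (by positivity) (by linarith)
    set mult : Finset ℕ := (Finset.Ioc 0 X).filter (m l ∣ ·) with hmult
    set B : Finset ℕ := (Finset.range (2 * X)).biUnion fun i => bad (l + i + 1) with hB
    have hsub : (↑(mult \ B) : Set ℕ) ⊆ A l ∩ Set.Iic X := by
      intro n hn
      rw [Finset.mem_coe, Finset.mem_sdiff, hmult, Finset.mem_filter, Finset.mem_Ioc] at hn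
      obtain ⟨⟨⟨hn0, hnX⟩, hdvd⟩, hnB⟩ := hn
      refine ⟨⟨hn0, hdvd, fun j hj t ht => ?_⟩, hnX⟩
      by_contra! hlt
      rw [abs_lt] at hlt
      push_cast at hlt
      have ht1 : m j ≤ t * m j := Nat.le_mul_of_pos_left _ ht
      have hNj := hmN j
      have hlt1 : n < t * m j + N j := by zify; linarith
      have hlt2 : t * m j < n + N j := by zify; linarith
      have htX : t * m j ≤ 2 * X := by omega
      apply hnB
      rw [hB, Finset.mem_biUnion]
      refine ⟨j - l - 1, ?_, ?_⟩
      · rw [Finset.mem_range]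
        have := hmlt j
        omega
      · have hjj : l + (j - l - 1) + 1 = j := by omega
        rw [hjj, hbad, Finset.mem_image]
        refine ⟨(t, n + N j - t * m j), ?_, ?_⟩
        · rw [Finset.mem_product, Finset.mem_Icc, Finset.mem_range]
          refine ⟨⟨ht, ?_⟩, ?_⟩
          · exact (Nat.le_div_iff_mul_le (hmpos j)).2 htX
          · simp only; omega
        · simp only; omega
    have hcard : mult.card ≤ (A l ∩ Set.Iic X).ncard + B.card := by
      have h1 := Set.ncard_le_ncard hsub ((Set.finite_Iic X).subset Set.inter_subset_right)
      rw [Set.ncard_coe_finset] at h1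
      have h2 := Finset.le_card_sdiff B mult
      omega
    have hBcard : (B.card : ℝ) ≤ X / (4 * m l) := by
      calc (B.card : ℝ) ≤ ∑ i ∈ Finset.range (2 * X), ((bad (l + i + 1)).card : ℝ) := by
            exact_mod_cast Finset.card_biUnion_le
        _ ≤ ∑ i ∈ Finset.range (2 * X), X / (8 * m l) * (1 / 2 : ℝ) ^ i :=
            Finset.sum_le_sum fun i _ => hcardbad i
        _ = X / (8 * m l) * ∑ i ∈ Finset.range (2 * X), (1 / 2 : ℝ) ^ i := by
            rw [Finset.mul_sum]
        _ ≤ X / (8 * m l) * (2 * (1 / 2) ^ 0) := by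
            gcongr
            exact sum_half_pow_le 0 _ fun _ _ => Nat.zero_le _
        _ = X / (4 * m l) := by rw [pow_zero]; field_simp; norm_num
    have hmultcard : (X : ℝ) / m l - 1 ≤ mult.card := by
      rw [hmult, Nat.Ioc_filter_dvd_card_eq_div, sub_le_iff_le_add, div_le_iff₀ hml]
      have h1 := Nat.lt_div_mul_add (a := X) (hmpos l)
      have h2 : (X : ℝ) < (X / m l : ℕ) * m l + m l := by exact_mod_cast h1
      nlinarith
    have hcard' : (mult.card : ℝ) ≤ (A l ∩ Set.Iic X).ncard + B.card := by exact_mod_cast hcard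
    have hX4 : (4 : ℝ) ≤ X / m l := by
      rw [le_div_iff₀ hml]; exact_mod_cast hX
    have e1 : 1 / (2 * (m l : ℝ)) * X = (X / m l) / 2 := by field_simp
    have e2 : (X : ℝ) / (4 * m l) = (X / m l) / 4 := by field_simp
    rw [e1]
    rw [e2] at hBcard
    linarith
  · rintro l n ⟨hn0, hdvd, -⟩
    have := Nat.le_of_dvd hn0 hdvd
    have := hmN l
    omega
  · have hlt : ∀ l j : ℕ, l < j → ∀ n ∈ A l, ∀ q ∈ A j, (N j : ℤ) ≤ |(n : ℤ) - q| := by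
      rintro l j hlj n ⟨-, -, hn⟩ q ⟨hq0, ⟨t, rfl⟩, -⟩
      have ht : 0 < t := Nat.pos_of_mul_pos_left hq0
      have := hn j hlj t ht
      rwa [mul_comm t] at this
    intro l j n hn q hq hne
    rcases lt_trichotomy l j with h | h | h
    · rw [max_eq_right h.le]; exact hlt l j h n hn q hq
    · subst h
      rw [max_self]
      have hnq : n ≠ q := fun h => hne (by rw [h])
      have hd : (m l : ℤ) ∣ (n : ℤ) - q :=
        dvd_sub (Int.natCast_dvd_natCast.2 hn.2.1) (Int.natCast_dvd_natCast.2 hq.2.1)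
      have h1 := Int.le_of_dvd (abs_pos.2 (sub_ne_zero.2 (by exact_mod_cast hnq)))
        ((dvd_abs _ _).2 hd)
      have h2 := hmN l
      omega
    · rw [max_eq_left h.le, abs_sub_comm]; exact hlt j l h q hq n hn

/-! ### Construction of a frequently hypercyclic vector -/

/-- Finitely supported rational sequences are dense in `ℓ_p^v` when `v` is summable. -/
lemma exists_rat_approx {p : ℝ} (hp0 : 0 < p) {v : ℤ → ℝ} (hv : ∀ k, 0 < v k)
    (hs : Summable v) {y : ℤ → ℝ} (hy : Memlpv p v y) {η : ℝ} (hη : 0 < η) :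
    ∃ z : ℤ →₀ ℚ, ∀ F : Finset ℤ, ∑ k ∈ F, |(z k : ℝ) - y k| ^ p * v k ≤ η := by
  classical
  obtain ⟨S, hS⟩ := summable_iff_vanishing_norm.1 hy (η / 2) (half_pos hη)
  have hV : 0 ≤ ∑' k, v k := tsum_nonneg fun k => (hv k).le
  set V := ∑' k, v k with hVdef
  set θ : ℝ := η / (2 * (V + 1)) with hθ
  have hθpos : 0 < θ := by positivity
  have hq : ∀ k, ∃ q : ℚ, |(q : ℝ) - y k| ^ p ≤ θ := by
    intro k
    obtain ⟨q, hq1, hq2⟩ := exists_rat_btwn (show y k < y k + θ ^ (1 / p) by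
      linarith [Real.rpow_pos_of_pos hθpos (1 / p)])
    refine ⟨q, ?_⟩
    have h1 : |(q : ℝ) - y k| ≤ θ ^ (1 / p) := by
      rw [abs_of_pos (by linarith)]; linarith
    refine (Real.rpow_le_rpow (abs_nonneg _) h1 hp0.le).trans ?_
    rw [← Real.rpow_mul hθpos.le, one_div_mul_cancel hp0.ne', Real.rpow_one]
  choose q hq using hq
  refine ⟨Finsupp.onFinset S (fun k => if k ∈ S then q k else 0)
    fun k hk => by by_contra h; simp [h] at hk, fun F => ?_⟩
  simp only [Finsupp.onFinset_apply]
  rw [← Finset.sum_filter_add_sum_filter_not F (· ∈ S)]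
  have h1 : ∑ k ∈ F with k ∈ S, |((if k ∈ S then q k else 0 : ℚ) : ℝ) - y k| ^ p * v k
      ≤ η / 2 := by
    calc _ ≤ ∑ k ∈ F with k ∈ S, θ * v k := Finset.sum_le_sum fun k hk => by
          rw [if_pos (Finset.mem_filter.1 hk).2]
          exact mul_le_mul_of_nonneg_right (hq k) (hv k).le
      _ = θ * ∑ k ∈ F with k ∈ S, v k := by rw [Finset.mul_sum]
      _ ≤ θ * (V + 1) := by
          gcongr
          linarith [hs.sum_le_tsum (F.filter (· ∈ S)) fun k _ => (hv k).le]
      _ = η / 2 := by rw [hθ]; field_simp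
  have h2 : ∑ k ∈ F with k ∉ S, |((if k ∈ S then q k else 0 : ℚ) : ℝ) - y k| ^ p * v k
      ≤ η / 2 := by
    have h3 := hS (F.filter (· ∉ S)) (by
      rw [Finset.disjoint_left]
      exact fun k hk => (Finset.mem_filter.1 hk).2)
    refine le_trans (le_of_eq (Finset.sum_congr rfl fun k hk => ?_))
      ((le_abs_self _).trans h3.le)
    rw [if_neg (Finset.mem_filter.1 hk).2]
    simp
  linarith

lemma abs_sub_rpow_le {p : ℝ} (hp0 : 0 < p) (a b c : ℝ) :
    |a - c| ^ p ≤ 2 ^ p * (|a - b| ^ p + |b - c| ^ p) := by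
  have h1 : |a - c| ≤ 2 * max |a - b| |b - c| := by
    have := abs_sub_le a b c
    linarith [le_max_left |a - b| |b - c|, le_max_right |a - b| |b - c|]
  refine (Real.rpow_le_rpow (abs_nonneg _) h1 hp0.le).trans ?_
  rw [Real.mul_rpow (by norm_num) (le_max_of_le_left (abs_nonneg _))]
  gcongr
  rcases max_choice |a - b| |b - c| with h | h <;> rw [h]
  · exact le_add_of_nonneg_right (by positivity)
  · exact le_add_of_nonneg_left (by positivity)

/-- The frequently hypercyclic vector carries, around each point `n` of the `l`-th separated set,
a copy of the `l`-th element of a dense sequence of finitely supported targets. After `n` shifts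
the copies other than the one at `n` sit so far from the origin that the tails of `∑ v k` control
their contribution. -/
lemma freqHypercyclic_of_summable (p : ℝ) (hp : 1 ≤ p) (v : ℤ → ℝ) (hv : ∀ k, 0 < v k)
    (hs : Summable v) : FHBackwardShift p v := by
  classical
  have hp0 : 0 < p := by linarith
  -- Each finitely supported rational sequence is `u l` for infinitely many `l`.
  obtain ⟨f, hf⟩ := exists_surjective_nat (ℤ →₀ ℚ)
  set u : ℕ → ℤ → ℝ := fun l k => (f (Nat.unpair l).1 k : ℝ) with hu
  have hr : ∀ l, ∃ r : ℕ, (∀ k, |u l k| ≤ r) ∧ ∀ k : ℤ, (r : ℤ) < |k| → u l k = 0 := by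
    intro l
    set g := f (Nat.unpair l).1 with hg
    refine ⟨∑ k ∈ g.support, (k.natAbs + ⌈|u l k|⌉₊), fun k => ?_, fun k hk => ?_⟩
    · by_cases hk : k ∈ g.support
      · have h1 := Finset.single_le_sum (f := fun k : ℤ => k.natAbs + ⌈|u l k|⌉₊)
          (fun _ _ => Nat.zero_le _) hk
        refine (Nat.le_ceil _).trans (Nat.cast_le.2 (le_trans ?_ h1))
        exact Nat.le_add_left _ _
      · have h0 : u l k = 0 := by
          simp only [hu]; rw [← hg, Finsupp.notMem_support_iff.1 hk, Rat.cast_zero]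
        rw [h0, abs_zero]; positivity
    · by_contra hne
      have hks : k ∈ g.support := by
        rw [Finsupp.mem_support_iff]
        intro h0
        apply hne
        simp only [hu]; rw [← hg, h0, Rat.cast_zero]
      have h1 := Finset.single_le_sum (f := fun k : ℤ => k.natAbs + ⌈|u l k|⌉₊)
          (fun _ _ => Nat.zero_le _) hks
      rw [Int.abs_eq_natAbs] at hk
      omega
  choose r hrb hrs using hr
  set R : ℕ → ℕ := fun l => ∑ i ∈ Finset.range (l + 1), r i with hR
  have hRmono : Monotone R := fun a b hab =>
    Finset.sum_le_sum_of_subset (Finset.range_mono (by omega))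
  have hrR : ∀ l, r l ≤ R l := fun l =>
    Finset.single_le_sum (f := r) (fun _ _ => Nat.zero_le _) (Finset.self_mem_range_succ l)
  have hub : ∀ l k, |u l k| ≤ R l := fun l k => (hrb l k).trans (Nat.cast_le.2 (hrR l))
  have hus : ∀ l k, (R l : ℤ) < |k| → u l k = 0 := fun l k hk =>
    hrs l k (lt_of_le_of_lt (Nat.cast_le.2 (hrR l)) hk)
  have hT : ∀ s, ∃ T : ℕ, ∀ F : Finset ℤ, (∀ k ∈ F, (T : ℤ) ≤ |k|) →
      ∑ k ∈ F, (R s : ℝ) ^ p * v k ≤ (1 / 2) ^ s := by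
    intro s
    have hRp : (0 : ℝ) ≤ (R s : ℝ) ^ p := by positivity
    obtain ⟨S, hS⟩ := summable_iff_vanishing_norm.1 hs ((1 / 2) ^ s / ((R s : ℝ) ^ p + 1))
      (by positivity)
    refine ⟨∑ k ∈ S, k.natAbs + 1, fun F hF => ?_⟩
    have h1 := hS F (by
      rw [Finset.disjoint_left]
      intro k hk hkS
      have h2 := hF k hk
      have h3 := Finset.single_le_sum (f := fun k : ℤ => k.natAbs)
        (fun _ _ => Nat.zero_le _) hkS
      rw [Int.abs_eq_natAbs] at h2
      omega)
    have h2 := ((le_abs_self _).trans h1.le)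
    rw [← Finset.mul_sum]
    rw [le_div_iff₀ (by positivity)] at h2
    nlinarith [Finset.sum_nonneg fun k (_ : k ∈ F) => (hv k).le]
  choose T hT using hT
  set N : ℕ → ℕ := fun s => ∑ i ∈ Finset.range (s + 1), (T i + r i) + R s + 1 with hN
  have hNR : ∀ s, 2 * R s < N s := fun s => by
    simp only [hN, hR, Finset.sum_add_distrib]
    omega
  have hNT : ∀ s, T s + R s ≤ N s := fun s => by
    have h1 := Finset.single_le_sum (f := T) (fun _ _ => Nat.zero_le _)
      (Finset.self_mem_range_succ s)
    simp only [hN, Finset.sum_add_distrib]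
    omega
  -- A sequence whose large values occur only far out has small norm.
  have hsmall : ∀ (l : ℕ) (z : ℤ → ℝ),
      (∀ k, z k ≠ 0 → ∃ s, l ≤ s ∧ (T s : ℤ) ≤ |k| ∧ |z k| ≤ R s) →
      ∀ F : Finset ℤ, ∑ k ∈ F, |z k| ^ p * v k ≤ 2 * (1 / 2) ^ l := by
    intro l z hz F
    have hz' : ∀ k, ∃ s, z k ≠ 0 → l ≤ s ∧ (T s : ℤ) ≤ |k| ∧ |z k| ≤ R s := by
      intro k
      by_cases h : z k = 0
      · exact ⟨0, fun h' => absurd h h'⟩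
      · obtain ⟨s, hs'⟩ := hz k h
        exact ⟨s, fun _ => hs'⟩
    choose σ hσ using hz'
    have h0 : ∑ k ∈ F, |z k| ^ p * v k = ∑ k ∈ F with z k ≠ 0, |z k| ^ p * v k := by
      rw [Finset.sum_filter]
      refine Finset.sum_congr rfl fun k _ => ?_
      split_ifs with h
      · rfl
      · rw [not_not.1 h, abs_zero, Real.zero_rpow hp0.ne', zero_mul]
    rw [h0]
    set G := F.filter (z · ≠ 0) with hG
    have hGz : ∀ k ∈ G, z k ≠ 0 := fun k hk => (Finset.mem_filter.1 hk).2
    rw [← Finset.sum_fiberwise_of_maps_to (t := G.image σ) (g := σ)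
      (fun k hk => Finset.mem_image_of_mem σ hk)]
    refine le_trans (Finset.sum_le_sum fun s _ => ?_) (sum_half_pow_le l (G.image σ) ?_)
    · refine le_trans (Finset.sum_le_sum fun k hk => ?_) (hT s {k ∈ G | σ k = s} ?_)
      · obtain ⟨hkG, rfl⟩ := Finset.mem_filter.1 hk
        have h1 := (hσ k (hGz k hkG)).2.2
        have h2 := hv k
        gcongr
      · intro k hk
        obtain ⟨hkG, rfl⟩ := Finset.mem_filter.1 hk
        exact (hσ k (hGz k hkG)).2.1
    · intro s hs'
      obtain ⟨k, hk, rfl⟩ := Finset.mem_image.1 hs'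
      exact (hσ k (hGz k hk)).1
  obtain ⟨A, hAdens, hAN, hAsep⟩ := exists_separated N
  -- The window of radius `R l` around each `n ∈ A l` carries a copy of `u l`.
  set W : ℤ → ℕ × ℕ → Prop := fun k q => q.2 ∈ A q.1 ∧ |k - q.2| ≤ R q.1 with hW
  have huniq : ∀ k q q', W k q → W k q' → q = q' := by
    rintro k ⟨l, n⟩ ⟨j, m⟩ ⟨hn, hkn⟩ ⟨hm, hkm⟩
    by_contra hne
    have h1 := hAsep l j n hn m hm hne
    have h2 : |(n : ℤ) - m| ≤ |k - n| + |k - m| := by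
      rw [abs_sub_comm k n]; exact abs_sub_le _ _ _
    have h3 := hRmono (le_max_left l j)
    have h4 := hRmono (le_max_right l j)
    have h5 := hNR (max l j)
    simp only at hkn hkm
    omega
  set x : ℤ → ℝ := fun k => if h : ∃ q, W k q then u h.choose.1 (k - h.choose.2) else 0 with hx
  have hxW : ∀ k q, W k q → x k = u q.1 (k - q.2) := by
    intro k q hq
    have hex : ∃ q, W k q := ⟨q, hq⟩
    simp only [hx]
    rw [dif_pos hex, huniq k _ q hex.choose_spec hq]
  have hxne : ∀ k, x k ≠ 0 → ∃ q, W k q := by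
    intro k hk
    by_contra hex
    exact hk (by simp only [hx]; rw [dif_neg hex])
  have hterm0 : ∀ (z : ℤ → ℝ) k, 0 ≤ |z k| ^ p * v k := fun z k =>
    mul_nonneg (by positivity) (hv k).le
  refine ⟨x, ?_, fun y hy ε hε => ?_⟩
  · refine summable_of_sum_le (hterm0 x) (hsmall 0 x fun k hk => ?_)
    obtain ⟨⟨j, m⟩, hq⟩ := hxne k hk
    refine ⟨j, Nat.zero_le _, ?_, ?_⟩
    · obtain ⟨hm, hkm⟩ := hq
      have h1 := hAN j m hm
      have h2 := hNT j
      simp only at hkm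
      have h3 := abs_le.1 hkm
      have h4 := le_abs_self k
      omega
    · rw [hxW k _ hq]; exact hub _ _
  · set η : ℝ := ε ^ p / 2 ^ p / 2 with hη
    have h2p : (0 : ℝ) < 2 ^ p := by positivity
    have hηpos : 0 < η := by positivity
    obtain ⟨z, hz⟩ := exists_rat_approx hp0 hv hs hy hηpos
    obtain ⟨i, hi⟩ := hf z
    obtain ⟨b, hb⟩ := exists_pow_lt_of_lt_one (half_pos hηpos)
      (show (1 / 2 : ℝ) < 1 by norm_num)
    set l := Nat.pair i b with hl
    have hul : ∀ k, u l k = z k := fun k => by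
      simp only [hu, hl, Nat.unpair_pair, hi]
    have hlb : 2 * (1 / 2 : ℝ) ^ l ≤ η := by
      have : (1 / 2 : ℝ) ^ l ≤ (1 / 2) ^ b :=
        pow_le_pow_of_le_one (by norm_num) (by norm_num) (Nat.right_le_pair i b)
      linarith
    refine ldens_pos_mono (fun n hn => ?_) (hAdens l)
    have hshift : ∀ F : Finset ℤ, ∑ k ∈ F, |x (k + n) - u l k| ^ p * v k ≤ 2 * (1 / 2) ^ l := by
      refine hsmall l (fun k => x (k + n) - u l k) fun k hk => ?_
      have hkR : (R l : ℤ) < |k| := by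
        by_contra! hle
        apply hk
        rw [hxW (k + n) (l, n) ⟨hn, by simpa using hle⟩]
        simp
      rw [hus l k hkR, sub_zero] at hk ⊢
      obtain ⟨⟨j, m⟩, hq⟩ := hxne _ hk
      have hxk := hxW _ _ hq
      obtain ⟨hm, hkm⟩ := hq
      simp only at hkm hxk hm
      have hne : (l, n) ≠ (j, m) := by
        intro h
        rw [Prod.mk.injEq] at h
        obtain ⟨rfl, rfl⟩ := h
        rw [add_sub_cancel_right] at hkm
        omega
      have h1 := hAsep l j n hn m hm hne
      have h2 := hNT (max l j)
      have h3 := hRmono (le_max_right l j)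
      refine ⟨max l j, le_max_left _ _, ?_, ?_⟩
      · have h4 : |(n : ℤ) - m| ≤ |k| + |k + n - m| := by
          have h5 : (n : ℤ) - m = (k + n - m) - k := by ring
          rw [h5, add_comm |k|]
          exact abs_sub _ _
        omega
      · rw [hxk]
        exact (hub _ _).trans (Nat.cast_le.2 h3)
    refine Real.tsum_le_of_sum_le (hterm0 fun k => x (k + n) - y k) fun F => ?_
    calc ∑ k ∈ F, |x (k + n) - y k| ^ p * v k
        ≤ ∑ k ∈ F, 2 ^ p * (|x (k + n) - u l k| ^ p * v k + |(z k : ℝ) - y k| ^ p * v k) :=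
          Finset.sum_le_sum fun k _ => by
            rw [← add_mul, ← mul_assoc, ← hul k]
            exact mul_le_mul_of_nonneg_right (abs_sub_rpow_le hp0 _ _ _) (hv k).le
      _ ≤ 2 ^ p * (η + η) := by
          rw [← Finset.mul_sum, Finset.sum_add_distrib]
          exact mul_le_mul_of_nonneg_left (add_le_add ((hshift F).trans hlb) (hz F)) h2p.le
      _ = ε ^ p := by rw [hη]; field_simp; norm_num

/-- Let `1 ≤ p < ∞` and `v = (v_k)_{k∈ℤ}` strictly positive with
`(v_k/v_{k+1})_k` bounded. Then the backward shift is frequently hypercyclic on `ℓ_p^v`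
if and only if `Σ_{k∈ℤ} v_k < ∞`. -/
theorem backwardShift_freqHypercyclic_iff_summable
    (p : ℝ) (hp : 1 ≤ p) (v : ℤ → ℝ) (hv : ∀ k, 0 < v k)
    (hbdd : ∃ C : ℝ, ∀ k : ℤ, v k / v (k + 1) ≤ C) :
    FHBackwardShift p v ↔ Summable v := by
  exact ⟨summable_of_freqHypercyclic p hp v hv hbdd, freqHypercyclic_of_summable p hp v hv⟩
end
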